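/- Let n ≥ 2 and p ≥ 1. Every isometry Φ of the p-Wasserstein space W_p(T^n) over the flat torus T^n is trivial: there exists an isometry ψ of T^n such that Φ(μ) = ψ_# μ for all μ ∈ W_p(T^n). Hence Isom(W_p(T^n)) is isomorphic to Isom(T^n). -/

import Mathlib

open MeasureTheory Filter

/-- The `p`-Wasserstein distance with cost function `c` (the distance of the
underlying space): infimum over couplings of `∫ c(x,y)^p dπ`, to the power `1/p`. -/
noncomputable def wassersteinDist {X : Type*} [MeasurableSpace X]
    (c : X → X → ℝ) (p : ℝ) (μ ν : Measure X) : ℝ :=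
  sInf {r : ℝ | ∃ π : Measure (X × X), IsProbabilityMeasure π ∧
      π.map Prod.fst = μ ∧ π.map Prod.snd = ν ∧
      r = ∫ q, c q.1 q.2 ^ p ∂π} ^ (1 / p)

/-- The flat `n`-dimensional torus `ℝ^n/ℤ^n`. -/
abbrev Torus (n : ℕ) := Fin n → AddCircle (1 : ℝ)

/-- The flat (ℓ²) metric on the torus: each coordinate distance is the
distance `|(x_k - y_k) mod 1|` on `ℝ/ℤ`. -/
noncomputable def torusDist {n : ℕ} (x y : Torus n) : ℝ :=
  Real.sqrt (∑ k, dist (x k) (y k) ^ 2)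

namespace WT

/-- The point `1/2` of the circle. -/
noncomputable def half : AddCircle (1 : ℝ) := ((1 / 2 : ℝ) : AddCircle (1 : ℝ))

lemma half_add_half : half + half = 0 := by
  unfold half
  rw [← AddCircle.coe_add]
  norm_num

lemma norm_le_half (t : AddCircle (1 : ℝ)) : ‖t‖ ≤ 1 / 2 := by
  have := AddCircle.norm_le_half_period 1 (x := t) one_ne_zero
  simpa using this

lemma norm_coe {x : ℝ} (h : |x| ≤ 1 / 2) : ‖(x : AddCircle (1 : ℝ))‖ = |x| := by
  rw [AddCircle.norm_coe_eq_abs_iff 1 one_ne_zero]; simpa using h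

/-- Representative in `[-1/2, 1/2]`. -/
lemma exists_rep (t : AddCircle (1 : ℝ)) : ∃ x : ℝ, |x| ≤ 1 / 2 ∧ (x : AddCircle (1 : ℝ)) = t := by
  induction t using QuotientAddGroup.induction_on with
  | H x =>
    refine ⟨x - round x, abs_sub_round x, ?_⟩
    rw [AddCircle.coe_sub]
    have : (((round x : ℤ) : ℝ) : AddCircle (1 : ℝ)) = 0 := by
      rw [AddCircle.coe_eq_zero_iff]
      exact ⟨round x, by simp⟩
    rw [this, sub_zero]

lemma norm_add_half (t : AddCircle (1 : ℝ)) : ‖t + half‖ = 1 / 2 - ‖t‖ := by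
  obtain ⟨x, hx, rfl⟩ := exists_rep t
  rw [norm_coe hx]
  have hx' := abs_le.mp hx
  rcases le_total x 0 with h | h
  · unfold half
    rw [← AddCircle.coe_add, norm_coe (by rw [abs_le]; constructor <;> linarith),
      abs_of_nonneg (by linarith), abs_of_nonpos h]; ring
  · have : (x : AddCircle (1 : ℝ)) + half = ((x - 1 / 2 : ℝ) : AddCircle (1 : ℝ)) := by
      rw [AddCircle.coe_sub]
      have := half_add_half
      change _ = (x : AddCircle (1 : ℝ)) - half
      rw [sub_eq_add_neg, neg_eq_of_add_eq_zero_left this]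
    rw [this, norm_coe (by rw [abs_le]; constructor <;> linarith),
      abs_of_nonpos (by linarith), abs_of_nonneg h]; ring

lemma neg_half : -half = half := neg_eq_of_add_eq_zero_left half_add_half

lemma norm_half : ‖half‖ = 1 / 2 := by
  have := norm_add_half 0
  simpa using this

lemma half_ne_zero : half ≠ 0 := by
  intro h
  have := norm_half
  rw [h] at this; norm_num at this

lemma norm_eq_half {t : AddCircle (1 : ℝ)} (h : ‖t‖ = 1 / 2) : t = half := by
  have := norm_add_half t
  rw [h, sub_self, norm_eq_zero] at this
  rw [← neg_half]; exact eq_neg_of_add_eq_zero_left this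

lemma add_half_ne (t : AddCircle (1 : ℝ)) : t + half ≠ t := by
  simpa using half_ne_zero

variable {n : ℕ}

/-- Antipode. -/
noncomputable def anti (x : Torus n) : Torus n := fun k => x k + half

lemma anti_anti (x : Torus n) : anti (anti x) = x := by
  funext k; simp [anti, add_assoc, half_add_half]

/-- Diameter. -/
noncomputable def D (n : ℕ) : ℝ := Real.sqrt (n / 4)

lemma D_sq : D n ^ 2 = n / 4 := Real.sq_sqrt (by positivity)

lemma D_pos (hn : 2 ≤ n) : 0 < D n := Real.sqrt_pos.mpr (by
  have : (2:ℝ) ≤ n := by exact_mod_cast hn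
  linarith)

lemma td_nonneg (x y : Torus n) : 0 ≤ torusDist x y := Real.sqrt_nonneg _

lemma td_sq (x y : Torus n) : torusDist x y ^ 2 = ∑ k, ‖x k - y k‖ ^ 2 := by
  unfold torusDist
  rw [Real.sq_sqrt (by positivity)]
  simp [dist_eq_norm]

lemma td_comm (x y : Torus n) : torusDist x y = torusDist y x := by
  unfold torusDist; simp [dist_comm]

lemma td_self (x : Torus n) : torusDist x x = 0 := by
  unfold torusDist; simp

lemma td_cont : Continuous (fun q : Torus n × Torus n => torusDist q.1 q.2) := by
  unfold torusDist
  fun_prop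

lemma sq_sum_anti (x y : Torus n) :
    torusDist y x ^ 2 + torusDist y (anti x) ^ 2
      = n / 4 - 2 * ∑ k, ‖y k - x k‖ * (1 / 2 - ‖y k - x k‖) := by
  rw [td_sq, td_sq, Finset.mul_sum, ← Finset.sum_add_distrib]
  have : (n : ℝ) / 4 = ∑ k : Fin n, (1 / 4 : ℝ) := by simp; ring
  rw [this, ← Finset.sum_sub_distrib]
  refine Finset.sum_congr rfl fun k _ => ?_
  have : y k - anti x k = (y k - x k) + half := by
    unfold anti
    rw [sub_add_eq_sub_sub, sub_eq_add_neg (y k - x k), neg_half]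
  rw [this, norm_add_half]
  ring

lemma sq_sum_le (x y : Torus n) :
    torusDist y x ^ 2 + torusDist y (anti x) ^ 2 ≤ n / 4 := by
  rw [sq_sum_anti]
  have : 0 ≤ ∑ k, ‖y k - x k‖ * (1 / 2 - ‖y k - x k‖) :=
    Finset.sum_nonneg fun k _ => mul_nonneg (norm_nonneg _) (by linarith [norm_le_half (y k - x k)])
  linarith

lemma td_le (x y : Torus n) : torusDist x y ≤ D n := by
  unfold D
  apply Real.le_sqrt_of_sq_le
  have := sq_sum_le y x
  nlinarith [sq_nonneg (torusDist x (anti y))]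

lemma td_eq_zero {x y : Torus n} (h : torusDist x y = 0) : x = y := by
  have := td_sq x y
  rw [h] at this
  have h2 : ∑ k, ‖x k - y k‖ ^ 2 = 0 := by rw [← this]; norm_num
  rw [Finset.sum_eq_zero_iff_of_nonneg (fun _ _ => by positivity)] at h2
  funext k
  have := h2 k (Finset.mem_univ _)
  rw [sq_eq_zero_iff, norm_eq_zero] at this
  exact sub_eq_zero.mp this

lemma td_anti (x : Torus n) : torusDist x (anti x) = D n := by
  have h := sq_sum_anti x x
  simp only [sub_self, norm_zero, zero_mul, Finset.sum_const_zero, mul_zero, sub_zero, td_self] at h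
  unfold D
  rw [← h]
  simp [Real.sqrt_sq (td_nonneg _ _)]

lemma td_eq_D {x y : Torus n} (h : torusDist y x = D n) : y = anti x := by
  have h1 := sq_sum_le x y
  rw [h, D_sq] at h1
  have h2 : torusDist y (anti x) ^ 2 = 0 := le_antisymm (by linarith) (sq_nonneg _)
  exact td_eq_zero (by simpa using h2)

lemma td_triangle (x y z : Torus n) : torusDist x z ≤ torusDist x y + torusDist y z := by
  have key : ∀ x y : Torus n, torusDist x y
      = ‖(WithLp.toLp 2 (fun k => dist (x k) (y k)) : EuclideanSpace ℝ (Fin n))‖ := by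
    intro x y
    rw [EuclideanSpace.norm_eq]; simp [torusDist]
  have h1 : torusDist x z ≤
     ‖(WithLp.toLp 2 (fun k => dist (x k) (y k) + dist (y k) (z k)) : EuclideanSpace ℝ (Fin n))‖ := by
    rw [EuclideanSpace.norm_eq]
    unfold torusDist
    apply Real.sqrt_le_sqrt
    refine Finset.sum_le_sum fun k _ => ?_
    simp only [Real.norm_eq_abs, sq_abs]
    have := dist_triangle (x k) (y k) (z k)
    gcongr
  refine h1.trans ?_
  rw [key x y, key y z]
  exact norm_add_le (WithLp.toLp 2 (fun k => dist (x k) (y k)) : EuclideanSpace ℝ (Fin n))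
    (WithLp.toLp 2 (fun k => dist (y k) (z k)) : EuclideanSpace ℝ (Fin n))

lemma dist_le_td (x y : Torus n) : dist x y ≤ torusDist x y := by
  rw [dist_pi_le_iff (td_nonneg _ _)]
  intro k
  unfold torusDist
  apply Real.le_sqrt_of_sq_le
  exact Finset.single_le_sum (f := fun k => dist (x k) (y k) ^ 2) (fun _ _ => by positivity)
    (Finset.mem_univ k)

lemma td_le_dist (x y : Torus n) : torusDist x y ≤ Real.sqrt n * dist x y := by
  unfold torusDist
  have : Real.sqrt n * dist x y = Real.sqrt (n * dist x y ^ 2) := by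
    rw [Real.sqrt_mul (by positivity), Real.sqrt_sq dist_nonneg]
  rw [this]
  apply Real.sqrt_le_sqrt
  have : (n : ℝ) * dist x y ^ 2 = ∑ k : Fin n, dist x y ^ 2 := by simp
  rw [this]
  refine Finset.sum_le_sum fun k _ => ?_
  have := dist_le_pi_dist x y k
  gcongr

/-! ### Costs and couplings -/

/-- Couplings. -/
def IsCpl (π : Measure (Torus n × Torus n)) (μ ν : Measure (Torus n)) : Prop :=
  IsProbabilityMeasure π ∧ π.map Prod.fst = μ ∧ π.map Prod.snd = ν

/-- Cost of a plan. -/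
noncomputable def cost (p : ℝ) (π : Measure (Torus n × Torus n)) : ℝ :=
  ∫ q, torusDist q.1 q.2 ^ p ∂π

/-- Optimal cost. -/
noncomputable def Cst (p : ℝ) (μ ν : Measure (Torus n)) : ℝ :=
  sInf {r : ℝ | ∃ π : Measure (Torus n × Torus n), IsProbabilityMeasure π ∧
      π.map Prod.fst = μ ∧ π.map Prod.snd = ν ∧
      r = ∫ q, torusDist q.1 q.2 ^ p ∂π}

variable {p : ℝ}

lemma cost_nonneg (π : Measure (Torus n × Torus n)) : 0 ≤ cost p π :=
  integral_nonneg fun _ => Real.rpow_nonneg (td_nonneg _ _) _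

lemma Cst_nonneg (μ ν : Measure (Torus n)) : 0 ≤ Cst p μ ν := by
  apply Real.sInf_nonneg
  rintro r ⟨π, -, -, -, rfl⟩
  exact cost_nonneg π

lemma Cst_le {π : Measure (Torus n × Torus n)} {μ ν : Measure (Torus n)} (h : IsCpl π μ ν) :
    Cst p μ ν ≤ cost p π := by
  apply csInf_le
  · refine ⟨0, ?_⟩
    rintro r ⟨π, -, -, -, rfl⟩
    exact cost_nonneg π
  · exact ⟨π, h.1, h.2.1, h.2.2, rfl⟩

lemma isCpl_prod (μ ν : Measure (Torus n)) [IsProbabilityMeasure μ] [IsProbabilityMeasure ν] :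
    IsCpl (μ.prod ν) μ ν :=
  ⟨inferInstance, by simp, by simp⟩

lemma le_Cst {μ ν : Measure (Torus n)} [IsProbabilityMeasure μ] [IsProbabilityMeasure ν] {m : ℝ}
    (h : ∀ π, IsCpl π μ ν → m ≤ cost p π) : m ≤ Cst p μ ν := by
  have hc := isCpl_prod μ ν
  apply le_csInf
  · exact ⟨_, _, hc.1, hc.2.1, hc.2.2, rfl⟩
  · rintro r ⟨π, h1, h2, h3, rfl⟩
    exact h π ⟨h1, h2, h3⟩

lemma exists_cpl_lt {μ ν : Measure (Torus n)} [IsProbabilityMeasure μ] [IsProbabilityMeasure ν]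
    {m : ℝ} (h : Cst p μ ν < m) : ∃ π, IsCpl π μ ν ∧ cost p π < m := by
  by_contra hcon
  push Not at hcon
  exact absurd (le_Cst hcon) (not_le.mpr h)

lemma IsCpl.swap {π : Measure (Torus n × Torus n)} {μ ν : Measure (Torus n)} (h : IsCpl π μ ν) :
    IsCpl (π.map Prod.swap) ν μ := by
  have := h.1
  refine ⟨Measure.isProbabilityMeasure_map measurable_swap.aemeasurable, ?_, ?_⟩
  · rw [Measure.map_map measurable_fst measurable_swap]; exact h.2.2
  · rw [Measure.map_map measurable_snd measurable_swap]; exact h.2.1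

lemma costfun_cont (hp : 0 ≤ p) : Continuous (fun q : Torus n × Torus n => torusDist q.1 q.2 ^ p) :=
  td_cont.rpow_const fun _ => Or.inr hp

lemma cost_swap (hp : 0 ≤ p) (π : Measure (Torus n × Torus n)) : cost p (π.map Prod.swap) = cost p π := by
  unfold cost
  rw [integral_map measurable_swap.aemeasurable (costfun_cont hp).aestronglyMeasurable]
  simp [td_comm]

lemma Cst_comm (hp : 0 ≤ p) (μ ν : Measure (Torus n)) [IsProbabilityMeasure μ]
    [IsProbabilityMeasure ν] : Cst p μ ν = Cst p ν μ := by
  apply le_antisymm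
  · exact le_Cst fun π hπ => cost_swap hp π ▸ Cst_le hπ.swap
  · exact le_Cst fun π hπ => cost_swap hp π ▸ Cst_le hπ.swap

lemma integrable_of_cont {X : Type*} [TopologicalSpace X] [CompactSpace X] [MeasurableSpace X]
    [OpensMeasurableSpace X] (μ : Measure X) [IsFiniteMeasure μ] {f : X → ℝ} (hf : Continuous f) :
    Integrable f μ := by
  obtain ⟨C, hC⟩ := isCompact_univ.exists_bound_of_continuousOn hf.continuousOn
  exact Integrable.of_bound hf.aestronglyMeasurable C (ae_of_all _ fun x => hC x (Set.mem_univ _))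

lemma integrable_cost (hp : 0 ≤ p) (π : Measure (Torus n × Torus n)) [IsFiniteMeasure π] :
    Integrable (fun q : Torus n × Torus n => torusDist q.1 q.2 ^ p) π :=
  integrable_of_cont π (costfun_cont hp)

lemma costfun_cont_left (hp : 0 ≤ p) (z : Torus n) : Continuous (fun y => torusDist y z ^ p) := by
  have h : Continuous (fun y : Torus n => torusDist y z) := by
    unfold torusDist
    fun_prop
  exact h.rpow_const fun _ => Or.inr hp

/-- The potential. -/
noncomputable def pot (p : ℝ) (μ : Measure (Torus n)) (z : Torus n) : ℝ :=
  ∫ y, torusDist y z ^ p ∂μ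

lemma IsCpl.ae_fst {π : Measure (Torus n × Torus n)} {μ ν : Measure (Torus n)} (h : IsCpl π μ ν)
    {P : Torus n → Prop} (hP : ∀ᵐ y ∂μ, P y) : ∀ᵐ q ∂π, P q.1 := by
  rw [← h.2.1] at hP
  exact ae_of_ae_map measurable_fst.aemeasurable hP

lemma IsCpl.ae_snd {π : Measure (Torus n × Torus n)} {μ ν : Measure (Torus n)} (h : IsCpl π μ ν)
    {P : Torus n → Prop} (hP : ∀ᵐ y ∂ν, P y) : ∀ᵐ q ∂π, P q.2 := by
  rw [← h.2.2] at hP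
  exact ae_of_ae_map measurable_snd.aemeasurable hP

lemma IsCpl.integral_fst {π : Measure (Torus n × Torus n)} {μ ν : Measure (Torus n)}
    (h : IsCpl π μ ν) {f : Torus n → ℝ} (hf : Measurable f) :
    ∫ q, f q.1 ∂π = ∫ y, f y ∂μ := by
  rw [← h.2.1, integral_map measurable_fst.aemeasurable hf.aestronglyMeasurable]

lemma IsCpl.integral_snd {π : Measure (Torus n × Torus n)} {μ ν : Measure (Torus n)}
    (h : IsCpl π μ ν) {f : Torus n → ℝ} (hf : Measurable f) :
    ∫ q, f q.2 ∂π = ∫ y, f y ∂ν := by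
  rw [← h.2.2, integral_map measurable_snd.aemeasurable hf.aestronglyMeasurable]

lemma cost_dirac (hp : 0 ≤ p) {π : Measure (Torus n × Torus n)} {μ : Measure (Torus n)}
    {z : Torus n} (h : IsCpl π μ (Measure.dirac z)) : cost p π = pot p μ z := by
  have h1 : ∀ᵐ q ∂π, q.2 = z := h.ae_snd (P := fun y => y = z) (by simp [ae_dirac_eq])
  unfold cost pot
  rw [← h.integral_fst (costfun_cont_left hp z).measurable]
  apply integral_congr_ae
  filter_upwards [h1] with q hq
  rw [hq]

lemma Cst_dirac (hp : 0 ≤ p) (μ : Measure (Torus n)) [IsProbabilityMeasure μ] (z : Torus n) :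
    Cst p μ (Measure.dirac z) = pot p μ z := by
  apply le_antisymm
  · have h := isCpl_prod μ (Measure.dirac z)
    rw [← cost_dirac hp h]; exact Cst_le h
  · exact le_Cst fun π hπ => (cost_dirac hp hπ).ge

lemma Cst_dirac_dirac (hp : 0 ≤ p) (x z : Torus n) :
    Cst p (Measure.dirac x) (Measure.dirac z) = torusDist x z ^ p := by
  rw [Cst_dirac hp]; simp [pot]

lemma dirac_of_ae {μ : Measure (Torus n)} [IsProbabilityMeasure μ] {x : Torus n}
    (h : ∀ᵐ y ∂μ, y = x) : μ = Measure.dirac x := by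
  ext s hs
  rw [Measure.dirac_apply' _ hs]
  by_cases hx : x ∈ s
  · simp only [hx, Set.indicator_of_mem, Pi.one_apply]
    rw [prob_compl_eq_zero_iff hs |>.symm]
    apply measure_mono_null _ (ae_iff.mp h)
    intro y hy hyx
    exact hy (hyx ▸ hx)
  · simp only [hx, not_false_eq_true, Set.indicator_of_notMem]
    apply measure_mono_null _ (ae_iff.mp h)
    intro y hy hyx
    exact hx (hyx ▸ hy)

lemma ae_eq_of_le_integral {X : Type*} [MeasurableSpace X] {μ : Measure X} [IsProbabilityMeasure μ]
    {f : X → ℝ} {L : ℝ} (hf : Integrable f μ) (hle : ∀ x, f x ≤ L) (h : L ≤ ∫ x, f x ∂μ) :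
    ∀ᵐ x ∂μ, f x = L := by
  have hi : Integrable (fun x => L - f x) μ := (integrable_const L).sub hf
  have h0 : 0 ≤ fun x => L - f x := fun x => by simpa using hle x
  have h2 : ∫ x, (L - f x) ∂μ = 0 := by
    apply le_antisymm
    · rw [integral_sub (integrable_const _) hf]
      simp; linarith
    · exact integral_nonneg h0
  rw [integral_eq_zero_iff_of_nonneg h0 hi] at h2
  filter_upwards [h2] with x hx
  simp only [Pi.zero_apply] at hx
  linarith

lemma dirac_of_Cst (hn : 2 ≤ n) (hp : 1 ≤ p) (μ ν : Measure (Torus n)) [IsProbabilityMeasure μ]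
    [IsProbabilityMeasure ν] (h : Cst p μ ν = D n ^ p) : ∃ x, μ = Measure.dirac x := by
  have hp0 : 0 ≤ p := by linarith
  have hpn : p ≠ 0 := by linarith
  have hle : ∀ q : Torus n × Torus n, torusDist q.1 q.2 ^ p ≤ D n ^ p := fun q =>
    Real.rpow_le_rpow (td_nonneg _ _) (td_le _ _) hp0
  have h1 : D n ^ p ≤ cost p (ν.prod μ) := by
    rw [← h, Cst_comm hp0]; exact Cst_le (isCpl_prod ν μ)
  have integ := integrable_cost hp0 (ν.prod μ)
  have h2 := ae_eq_of_le_integral integ hle h1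
  have h3 : ∀ᵐ q ∂(ν.prod μ), q.2 = anti q.1 := by
    filter_upwards [h2] with q hq
    rw [Real.rpow_left_inj (td_nonneg _ _) (D_pos hn).le hpn, td_comm] at hq
    exact td_eq_D hq
  have h4 := Measure.ae_ae_of_ae_prod h3
  obtain ⟨y, hy⟩ := h4.exists
  exact ⟨anti y, dirac_of_ae hy⟩

end WT

namespace WT
variable {n : ℕ} {p : ℝ}

lemma eq_of_atoms_le {μ ν : Measure (Torus n)} [IsProbabilityMeasure μ] [IsProbabilityMeasure ν]
    {S : Set (Torus n)} (hS : S.Finite) (hμ : ∀ᵐ y ∂μ, y ∈ S)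
    (h : ∀ x ∈ S, μ.real {x} ≤ ν.real {x}) : μ = ν := by
  apply Measure.eq_of_le_of_isProbabilityMeasure
  rw [Measure.le_iff]
  intro s hs
  have h1 : μ s = μ (s ∩ S) := by
    apply measure_congr
    filter_upwards [hμ] with y hy
    exact propext ⟨fun h => ⟨h, hy⟩, fun h => h.1⟩
  have hfin : (s ∩ S).Finite := hS.subset Set.inter_subset_right
  have h2 : μ (s ∩ S) ≤ ν (s ∩ S) := by
    have e : (s ∩ S) = ((hfin.toFinset : Finset (Torus n)) : Set (Torus n)) := by simp
    rw [e, ← sum_measure_singleton, ← sum_measure_singleton]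
    refine Finset.sum_le_sum fun x hx => ?_
    have hx' : x ∈ S := by
      have := hfin.mem_toFinset.mp hx
      exact this.2
    have := h x hx'
    rwa [measureReal_def, measureReal_def, ENNReal.toReal_le_toReal (by simp) (by simp)] at this
  calc μ s = μ (s ∩ S) := h1
    _ ≤ ν (s ∩ S) := h2
    _ ≤ ν s := measure_mono Set.inter_subset_left

/-- Two-point antipodal measures. -/
noncomputable def eta (x : Torus n) (m : ℝ) : Measure (Torus n) :=
  ENNReal.ofReal m • Measure.dirac x + ENNReal.ofReal (1 - m) • Measure.dirac (anti x)

lemma anti_ne (hn : 2 ≤ n) (x : Torus n) : anti x ≠ x := by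
  intro h
  exact add_half_ne (x ⟨0, by omega⟩) (congrFun h ⟨0, by omega⟩)

lemma eta_prob (x : Torus n) {m : ℝ} (h0 : 0 ≤ m) (h1 : m ≤ 1) : IsProbabilityMeasure (eta x m) := by
  constructor
  simp only [eta, Measure.add_apply, Measure.smul_apply, measure_univ, smul_eq_mul, mul_one]
  rw [← ENNReal.ofReal_add h0 (by linarith)]
  simp

lemma eta_ae (x : Torus n) (m : ℝ) : ∀ᵐ y ∂(eta x m), y = x ∨ y = anti x := by
  unfold eta
  rw [ae_add_measure_iff]
  constructor
  · exact Measure.ae_smul_measure (by simp [ae_dirac_eq]) _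
  · exact Measure.ae_smul_measure (by simp [ae_dirac_eq]) _

lemma eta_x (hn : 2 ≤ n) (x : Torus n) {m : ℝ} (h0 : 0 ≤ m) : (eta x m).real {x} = m := by
  have := anti_ne hn x
  simp [eta, measureReal_def, this, h0]

lemma eta_anti (hn : 2 ≤ n) (x : Torus n) {m : ℝ} (h1 : m ≤ 1) :
    (eta x m).real {anti x} = 1 - m := by
  have := (anti_ne hn x).symm
  simp [eta, measureReal_def, this, h1]

lemma integral_eta (x : Torus n) {m : ℝ} (h0 : 0 ≤ m) (h1 : m ≤ 1) (f : Torus n → ℝ) :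
    ∫ y, f y ∂(eta x m) = m * f x + (1 - m) * f (anti x) := by
  unfold eta
  have hi : ∀ z : Torus n, Integrable f (Measure.dirac z) := fun z =>
    integrable_dirac (by simp)
  rw [integral_add_measure ((hi x).smul_measure (by simp)) ((hi _).smul_measure (by simp)),
    integral_smul_measure, integral_smul_measure]
  simp [h0, h1]

lemma eq_eta_of_ae (hn : 2 ≤ n) (x : Torus n) {m : ℝ} (h0 : 0 ≤ m) (h1 : m ≤ 1)
    {ν : Measure (Torus n)} [IsProbabilityMeasure ν] (hae : ∀ᵐ y ∂ν, y = x ∨ y = anti x)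
    (hm : ν.real {x} = m) : ν = eta x m := by
  have := eta_prob x h0 h1
  apply eq_of_atoms_le (S := {x, anti x}) (by simp)
  · simpa using hae
  · intro z hz
    rcases hz with rfl | hz
    · rw [hm, eta_x hn _ h0]
    · rw [Set.mem_singleton_iff] at hz
      subst hz
      rw [eta_anti hn _ h1, ← hm]
      have h2 : Disjoint ({x} : Set (Torus n)) {anti x} := by
        simpa using (anti_ne hn x).symm
      have := measureReal_union (μ := ν) h2 (measurableSet_singleton _)
      have h3 : ν.real ({x} ∪ {anti x}) ≤ 1 := measureReal_le_one
      linarith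

/-- the criterion used to recognise `eta`. -/
lemma eq_eta_of_pot (hn : 2 ≤ n) (hp : 1 ≤ p) (x : Torus n) {m : ℝ} (h0 : 0 ≤ m) (h1 : m ≤ 1)
    {ν : Measure (Torus n)} [IsProbabilityMeasure ν] (hae : ∀ᵐ y ∂ν, y = x ∨ y = anti x)
    (hm : ∀ z, pot p ν z = pot p (eta x m) z) : ν = eta x m := by
  apply eq_eta_of_ae hn x h0 h1 hae
  have hD : 0 < D n ^ p := Real.rpow_pos_of_pos (D_pos hn) _
  have e1 : ∀ ρ : Measure (Torus n), IsProbabilityMeasure ρ → (∀ᵐ y ∂ρ, y = x ∨ y = anti x) →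
      pot p ρ (anti x) = ρ.real {x} * D n ^ p := by
    intro ρ _ hρ
    have : pot p ρ (anti x) = ∫ y, Set.indicator {x} (fun _ => D n ^ p) y ∂ρ := by
      apply integral_congr_ae
      filter_upwards [hρ] with y hy
      rcases hy with rfl | rfl
      · simp [td_anti]
      · simp [anti_ne hn, td_self, Real.zero_rpow (show p ≠ 0 by linarith)]
    rw [this, integral_indicator_const _ (measurableSet_singleton _)]
    simp
  have h2 := hm (anti x)
  rw [e1 ν inferInstance hae, e1 _ (eta_prob x h0 h1) (eta_ae x m), eta_x hn x h0] at h2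
  exact mul_right_cancel₀ hD.ne' h2

/-! ### Detecting atoms -/

lemma detect_upper (hn : 2 ≤ n) (hp : 1 ≤ p) (μ : Measure (Torus n)) [IsProbabilityMeasure μ]
    (x : Torus n) : Cst p μ (eta x (μ.real {x})) ≤ pot p μ (anti x) - μ.real {x} * D n ^ p := by
  classical
  have hp0 : 0 ≤ p := by linarith
  set g : Torus n → Torus n := fun y => if y = x then x else anti x with hg
  have hgm : Measurable g := Measurable.ite (measurableSet_singleton x) measurable_const measurable_const
  have hprob : IsProbabilityMeasure (μ.map g) := Measure.isProbabilityMeasure_map hgm.aemeasurable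
  have hge : μ.map g = eta x (μ.real {x}) := by
    apply eq_eta_of_ae hn x measureReal_nonneg measureReal_le_one
    · rw [ae_map_iff hgm.aemeasurable]
      · refine ae_of_all _ fun y => ?_
        by_cases h : y = x <;> simp [hg, h]
      · exact (Set.toFinite {x, anti x}).measurableSet
    · rw [measureReal_def, Measure.map_apply hgm (measurableSet_singleton x), measureReal_def]
      congr 2
      ext y
      by_cases h : y = x <;> simp [hg, h, anti_ne hn]
  have hm2 : Measurable (fun y => (y, g y)) := measurable_id.prodMk hgm
  have hcpl : IsCpl (μ.map fun y => (y, g y)) μ (eta x (μ.real {x})) := by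
    refine ⟨Measure.isProbabilityMeasure_map hm2.aemeasurable, ?_, ?_⟩
    · rw [Measure.map_map measurable_fst hm2]
      exact Measure.map_id
    · rw [Measure.map_map measurable_snd hm2, ← hge]; rfl
  refine (Cst_le hcpl).trans (le_of_eq ?_)
  unfold cost
  rw [integral_map hm2.aemeasurable (costfun_cont hp0).aestronglyMeasurable]
  have : ∀ y, torusDist y (g y) ^ p
      = torusDist y (anti x) ^ p - Set.indicator {x} (fun _ => D n ^ p) y := by
    intro y
    by_cases h : y = x
    · subst h; simp [hg, td_self, td_anti, Real.zero_rpow (show p ≠ 0 by linarith)]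
    · simp [hg, h]
  simp only [this]
  rw [integral_sub (integrable_of_cont μ (costfun_cont_left hp0 _))
    ((integrable_const _).indicator (measurableSet_singleton _)),
    integral_indicator_const _ (measurableSet_singleton _)]
  simp [pot]

lemma detect_lower (hn : 2 ≤ n) (hp : 1 ≤ p) (ν : Measure (Torus n)) [IsProbabilityMeasure ν]
    (x : Torus n) {m : ℝ} (h0 : 0 ≤ m) (h1 : m ≤ 1)
    (h : Cst p ν (eta x m) ≤ pot p ν (anti x) - m * D n ^ p) : m ≤ ν.real {x} := by
  have hp0 : 0 ≤ p := by linarith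
  have hpn : p ≠ 0 := by linarith
  have := eta_prob x h0 h1
  by_contra hlt
  push Not at hlt
  set f : Torus n → ℝ := fun y => D n ^ p - torusDist y (anti x) ^ p + torusDist y x ^ p with hf
  have hfc : Continuous f := (continuous_const.sub (costfun_cont_left hp0 _)).add
    (costfun_cont_left hp0 _)
  have hA : ∀ y, torusDist y (anti x) ^ p ≤ D n ^ p := fun y =>
    Real.rpow_le_rpow (td_nonneg _ _) (td_le _ _) hp0
  have hB : ∀ y, 0 ≤ torusDist y x ^ p := fun y => Real.rpow_nonneg (td_nonneg _ _) _
  have hf0 : ∀ y, 0 ≤ f y := fun y => by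
    have := hA y; have := hB y; simp only [hf]; linarith
  have hfz : ∀ y, f y ≤ 0 → y = x := fun y hy => by
    have h1 := hA y; have h2 := hB y
    simp only [hf] at hy
    have h3 : torusDist y x ^ p = 0 := by linarith
    rw [Real.rpow_eq_zero (td_nonneg _ _) hpn] at h3
    exact td_eq_zero h3
  have hfx : f x = 0 := by simp [hf, td_anti, td_self, Real.zero_rpow hpn]
  -- find δ
  obtain ⟨δ, hδ, hδm⟩ : ∃ δ > 0, ν.real {y | f y ≤ δ} < m := by
    have hanti : Antitone (fun j : ℕ => {y | f y ≤ 1 / ((j : ℝ) + 1)}) := by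
      intro a b hab y hy
      simp only [Set.mem_ofPred_eq] at hy ⊢
      exact hy.trans (by gcongr)
    have hmeas : ∀ δ : ℝ, MeasurableSet {y | f y ≤ δ} := fun δ =>
      (isClosed_le hfc continuous_const).measurableSet
    have ht := tendsto_measure_iInter_atTop (μ := ν)
      (fun j : ℕ => (hmeas (1 / ((j : ℝ) + 1))).nullMeasurableSet) hanti ⟨0, by simp⟩
    have hI : (⋂ j : ℕ, {y | f y ≤ 1 / ((j : ℝ) + 1)}) = {x} := by
      ext y
      simp only [Set.mem_iInter, Set.mem_ofPred_eq, Set.mem_singleton_iff]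
      constructor
      · intro hy
        exact hfz y (ge_of_tendsto' tendsto_one_div_add_atTop_nhds_zero_nat hy)
      · rintro rfl j
        rw [hfx]; positivity
    rw [hI] at ht
    have ht' := (ENNReal.tendsto_toReal (measure_ne_top ν {x})).comp ht
    obtain ⟨j, hj⟩ := (ht'.eventually (gt_mem_nhds hlt)).exists
    exact ⟨1 / ((j : ℝ) + 1), by positivity, hj⟩
  have hSm : MeasurableSet {y | f y ≤ δ} := (isClosed_le hfc continuous_const).measurableSet
  set e := δ * (m - ν.real {y | f y ≤ δ}) with he
  have hepos : 0 < e := mul_pos hδ (by linarith)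
  obtain ⟨π, hπ, hπc⟩ := exists_cpl_lt (show Cst p ν (eta x m) <
    pot p ν (anti x) - m * D n ^ p + e by linarith)
  have := hπ.1
  -- lower bound of the cost
  have hbound : ∀ᵐ q ∂π, torusDist q.1 (anti x) ^ p
      - Set.indicator {x} (fun _ => D n ^ p) q.2
      + δ * (Set.indicator {x} (fun _ => (1 : ℝ)) q.2
        - Set.indicator {y | f y ≤ δ} (fun _ => (1 : ℝ)) q.1)
      ≤ torusDist q.1 q.2 ^ p := by
    filter_upwards [hπ.ae_snd (eta_ae x m)] with q hq
    rcases hq with hq | hq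
    · rw [hq]
      have h3 := hf0 q.1
      by_cases h4 : f q.1 ≤ δ
      · simp only [Set.mem_singleton_iff, Set.indicator_of_mem, Set.mem_ofPred_eq, h4, sub_self,
          mul_zero, add_zero]
        simp only [hf] at h3; linarith
      · simp only [Set.mem_singleton_iff, Set.indicator_of_mem, Set.mem_ofPred_eq, h4,
          not_false_eq_true, Set.indicator_of_notMem, sub_zero, mul_one]
        push Not at h4
        simp only [hf] at h4; linarith
    · rw [hq]
      have h5 : anti x ∉ ({x} : Set (Torus n)) := by simpa using anti_ne hn x
      rw [Set.indicator_of_notMem h5, Set.indicator_of_notMem h5]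
      have h6 : 0 ≤ Set.indicator {y | f y ≤ δ} (fun _ => (1 : ℝ)) q.1 :=
        Set.indicator_nonneg (fun _ _ => zero_le_one) _
      nlinarith
  have m1 : Measurable (Set.indicator ({x} : Set (Torus n)) (fun _ => D n ^ p)) :=
    measurable_const.indicator (measurableSet_singleton _)
  have m2 : Measurable (Set.indicator ({x} : Set (Torus n)) (fun _ => (1 : ℝ))) :=
    measurable_const.indicator (measurableSet_singleton _)
  have m3 : Measurable (Set.indicator {y | f y ≤ δ} (fun _ => (1 : ℝ))) :=
    measurable_const.indicator hSm
  have i0 : Integrable (fun q : Torus n × Torus n => torusDist q.1 (anti x) ^ p) π :=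
    integrable_of_cont π ((costfun_cont_left hp0 (anti x)).comp continuous_fst)
  have bd : ∀ (s : Set (Torus n)) (c : ℝ) (y : Torus n), ‖Set.indicator s (fun _ => c) y‖ ≤ ‖c‖ :=
    fun s c y => norm_indicator_le_norm_self _ _
  have i1 : Integrable (fun q : Torus n × Torus n =>
      Set.indicator ({x} : Set (Torus n)) (fun _ => D n ^ p) q.2) π :=
    Integrable.of_bound (m1.comp measurable_snd).aestronglyMeasurable _ (ae_of_all _ fun q => bd _ _ _)
  have i2 : Integrable (fun q : Torus n × Torus n =>
      Set.indicator ({x} : Set (Torus n)) (fun _ => (1 : ℝ)) q.2) π :=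
    Integrable.of_bound (m2.comp measurable_snd).aestronglyMeasurable _ (ae_of_all _ fun q => bd _ _ _)
  have i3 : Integrable (fun q : Torus n × Torus n =>
      Set.indicator {y | f y ≤ δ} (fun _ => (1 : ℝ)) q.1) π :=
    Integrable.of_bound (m3.comp measurable_fst).aestronglyMeasurable _ (ae_of_all _ fun q => bd _ _ _)
  have i4 : Integrable (fun q : Torus n × Torus n =>
      δ * (Set.indicator {x} (fun _ => (1 : ℝ)) q.2
        - Set.indicator {y | f y ≤ δ} (fun _ => (1 : ℝ)) q.1)) π := (i2.sub i3).const_mul δ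
  have i5 : Integrable (fun q : Torus n × Torus n => torusDist q.1 (anti x) ^ p
      - Set.indicator {x} (fun _ => D n ^ p) q.2) π := i0.sub i1
  have key := integral_mono_ae (i5.add i4) (integrable_cost hp0 π) hbound
  have e1 : ∫ q, (torusDist q.1 (anti x) ^ p
      - Set.indicator {x} (fun _ => D n ^ p) q.2
      + δ * (Set.indicator {x} (fun _ => (1 : ℝ)) q.2
        - Set.indicator {y | f y ≤ δ} (fun _ => (1 : ℝ)) q.1)) ∂π
      = pot p ν (anti x) - m * D n ^ p + e := by
    rw [integral_add i5 i4, integral_sub i0 i1, integral_const_mul, integral_sub i2 i3,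
      hπ.integral_fst (f := fun y => torusDist y (anti x) ^ p) (costfun_cont_left hp0 _).measurable,
      hπ.integral_snd m1, hπ.integral_snd m2, hπ.integral_fst m3,
      integral_indicator_const _ (measurableSet_singleton _),
      integral_indicator_const _ (measurableSet_singleton _),
      integral_indicator_const _ hSm, eta_x hn x h0]
    simp [pot, he]
  have key2 : pot p ν (anti x) - m * D n ^ p + e ≤ cost p π := by
    rw [← e1]; exact key
  linarith

end WT

namespace WT
variable {n : ℕ} {p : ℝ}

lemma exists_net (r : ℝ) (hr : 0 < r) : ∃ T : Torus n → Torus n, Measurable T ∧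
    (Set.range T).Finite ∧ ∀ x, dist (T x) x < r := by
  obtain ⟨e, he⟩ := TopologicalSpace.exists_dense_seq (Torus n)
  have hcov : (Set.univ : Set (Torus n)) ⊆ ⋃ k, Metric.ball (e k) r := by
    intro x _
    obtain ⟨k, hk⟩ := he.exists_dist_lt x hr
    exact Set.mem_iUnion.mpr ⟨k, hk⟩
  obtain ⟨t, ht⟩ := isCompact_univ.elim_finite_subcover _ (fun k => Metric.isOpen_ball) hcov
  refine ⟨SimpleFunc.nearestPt e (t.sup id), SimpleFunc.measurable _, SimpleFunc.finite_range _, ?_⟩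
  intro x
  have hx := ht (Set.mem_univ x)
  simp only [Set.mem_iUnion] at hx
  obtain ⟨k, hk, hkx⟩ := hx
  have h1 := SimpleFunc.edist_nearestPt_le e x (k := k) (N := t.sup id) (Finset.le_sup (f := id) hk)
  rw [edist_dist, edist_dist, ENNReal.ofReal_le_ofReal_iff dist_nonneg] at h1
  rw [Metric.mem_ball, dist_comm] at hkx
  exact h1.trans_lt hkx

lemma exists_shifts (hn : 2 ≤ n) (r : ℝ) (hr : 0 < r) (M : ℕ) : ∃ v : Fin M → Torus n,
    Function.Injective v ∧ ∀ j, ‖v j‖ ≤ r := by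
  set r' := min r (1 / 2) with hr'
  have hr0 : 0 < r' := lt_min hr (by norm_num)
  have hb : ∀ j : Fin M, |r' * ((j : ℝ) / M)| ≤ r' := by
    intro j
    have hM : (0 : ℝ) < M := by exact_mod_cast (Nat.zero_le _).trans_lt j.2
    have hj : (j : ℝ) / M ≤ 1 := by
      rw [div_le_one hM]; exact_mod_cast j.2.le
    rw [abs_of_nonneg (by positivity)]
    exact mul_le_of_le_one_right hr0.le hj
  have hb2 : ∀ j : Fin M, |r' * ((j : ℝ) / M)| ≤ 1 / 2 := fun j => (hb j).trans (min_le_right _ _)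
  refine ⟨fun j _ => ((r' * ((j : ℝ) / M) : ℝ) : AddCircle (1 : ℝ)), ?_, ?_⟩
  · intro i j hij
    have h := congrArg norm (congrFun hij ⟨0, by omega⟩)
    simp only at h
    have hM : (0 : ℝ) < M := by exact_mod_cast (Nat.zero_le _).trans_lt j.2
    rw [norm_coe (hb2 i), norm_coe (hb2 j), abs_of_nonneg (by positivity),
      abs_of_nonneg (by positivity)] at h
    have h2 := mul_left_cancel₀ hr0.ne' h
    rw [div_left_inj' hM.ne'] at h2
    exact Fin.ext (by exact_mod_cast h2)
  · intro j
    rw [pi_norm_le_iff_of_nonneg hr.le]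
    intro k
    rw [norm_coe (hb2 j)]
    exact (hb j).trans (min_le_left _ _)

lemma exists_approx (hn : 2 ≤ n) (hp : 1 ≤ p) (μ : Measure (Torus n)) [IsProbabilityMeasure μ]
    {ε δ : ℝ} (hε : 0 < ε) (hδ : 0 < δ) :
    ∃ ρ : Measure (Torus n), IsProbabilityMeasure ρ ∧ (∃ S : Set (Torus n), S.Finite ∧
      ∀ᵐ y ∂ρ, y ∈ S) ∧ (∀ x, ρ.real {x} ≤ ε) ∧ Cst p μ ρ ≤ δ := by
  have hp0 : 0 ≤ p := by linarith
  have hsn : 0 < Real.sqrt n := Real.sqrt_pos.mpr (by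
    have : 0 < n := by omega
    exact_mod_cast this)
  set s := δ ^ (1 / p) with hs
  have hs0 : 0 < s := Real.rpow_pos_of_pos hδ _
  have hsp : s ^ p = δ := by
    rw [hs, ← Real.rpow_mul hδ.le, one_div, inv_mul_cancel₀ (by linarith), Real.rpow_one]
  set r := s / (2 * Real.sqrt n) with hr
  have hr0 : 0 < r := by positivity
  obtain ⟨M', hM'⟩ := exists_nat_one_div_lt hε
  set M := M' + 1 with hM
  obtain ⟨T, hTm, hTf, hTd⟩ := exists_net (n := n) r hr0
  obtain ⟨v, hvi, hvr⟩ := exists_shifts hn r hr0 M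
  set U : Measure (Fin M) := ((M : ENNReal)⁻¹) • Measure.count with hU
  have hMne : (M : ENNReal) ≠ 0 := by simp [hM]
  have hUp : IsProbabilityMeasure U := by
    constructor
    simp only [hU, Measure.smul_apply, smul_eq_mul]
    rw [Measure.count_apply_finite _ Set.finite_univ]
    simp only [Set.Finite.toFinset_univ, Finset.card_univ, Fintype.card_fin]
    exact ENNReal.inv_mul_cancel hMne (by simp)
  set g : Torus n × Fin M → Torus n := fun q => T q.1 + v q.2 with hg
  have hvm : Measurable v := measurable_of_finite v
  have hgm : Measurable g := (hTm.comp measurable_fst).add (hvm.comp measurable_snd)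
  have hm2 : Measurable (fun q : Torus n × Fin M => (q.1, g q)) := measurable_fst.prodMk hgm
  have hcpl : IsCpl ((μ.prod U).map fun q => (q.1, g q)) μ ((μ.prod U).map g) := by
    refine ⟨Measure.isProbabilityMeasure_map hm2.aemeasurable, ?_, ?_⟩
    · rw [Measure.map_map measurable_fst hm2]
      change (μ.prod U).map Prod.fst = μ
      simp
    · rw [Measure.map_map measurable_snd hm2]; rfl
  refine ⟨(μ.prod U).map g, Measure.isProbabilityMeasure_map hgm.aemeasurable, ?_, ?_, ?_⟩
  · have hSf : (Set.image2 (fun a b => a + b) (Set.range T) (Set.range v)).Finite :=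
      hTf.image2 _ (Set.finite_range v)
    refine ⟨_, hSf, ?_⟩
    refine (ae_map_iff (p := fun y => y ∈ Set.image2 (fun a b => a + b) (Set.range T) (Set.range v))
      hgm.aemeasurable hSf.measurableSet).mpr ?_
    exact ae_of_all _ fun q => ⟨T q.1, ⟨q.1, rfl⟩, v q.2, ⟨q.2, rfl⟩, rfl⟩
  · intro x
    have h1 : ((μ.prod U).map g) {x} ≤ (M : ENNReal)⁻¹ := by
      rw [Measure.map_apply hgm (measurableSet_singleton x),
        Measure.prod_apply (hgm (measurableSet_singleton x))]
      calc ∫⁻ a, U (Prod.mk a ⁻¹' (g ⁻¹' {x})) ∂μ ≤ ∫⁻ a, (M : ENNReal)⁻¹ ∂μ := by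
            apply lintegral_mono
            intro a
            have hsub : (Prod.mk a ⁻¹' (g ⁻¹' {x})).Subsingleton := by
              intro i hi j hj
              simp only [Set.mem_preimage, hg, Set.mem_singleton_iff] at hi hj
              exact hvi (add_left_cancel (hi.trans hj.symm))
            have hc : Measure.count (Prod.mk a ⁻¹' (g ⁻¹' {x})) ≤ (1 : ENNReal) := by
              rcases hsub.eq_empty_or_singleton with h | ⟨i, h⟩
              · rw [h]; simp
              · rw [h]; simp
            simp only [hU, Measure.smul_apply, smul_eq_mul]
            exact (mul_le_mul_right hc _).trans (by simp)
        _ = (M : ENNReal)⁻¹ := by simp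
    have h2 : ((μ.prod U).map g).real {x} ≤ ((M : ENNReal)⁻¹).toReal :=
      ENNReal.toReal_mono (by simp [hMne]) h1
    refine h2.trans ?_
    rw [ENNReal.toReal_inv]
    simp only [hM, ENNReal.toReal_natCast]
    rw [one_div] at hM'
    push_cast
    exact hM'.le
  · refine (Cst_le hcpl).trans ?_
    unfold cost
    rw [integral_map hm2.aemeasurable (costfun_cont hp0).aestronglyMeasurable]
    have hb : ∀ q : Torus n × Fin M, torusDist q.1 (g q) ^ p ≤ δ := by
      intro q
      rw [← hsp]
      apply Real.rpow_le_rpow (td_nonneg _ _) _ hp0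
      refine (td_le_dist _ _).trans ?_
      have : dist q.1 (g q) ≤ 2 * r := by
        calc dist q.1 (g q) ≤ dist q.1 (T q.1) + dist (T q.1) (T q.1 + v q.2) := dist_triangle _ _ _
          _ ≤ r + r := by
            apply add_le_add
            · rw [dist_comm]; exact (hTd _).le
            · simpa using hvr q.2
          _ = 2 * r := by ring
      calc Real.sqrt n * dist q.1 (g q) ≤ Real.sqrt n * (2 * r) := by gcongr
        _ = s := by rw [hr]; field_simp
    have integ : Integrable (fun q : Torus n × Fin M => torusDist q.1 (g q) ^ p) (μ.prod U) := by
      refine Integrable.of_bound ((costfun_cont hp0).measurable.comp hm2).aestronglyMeasurable δ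
        (ae_of_all _ fun q => ?_)
      rw [Real.norm_of_nonneg (Real.rpow_nonneg (td_nonneg _ _) _)]
      exact hb q
    calc _ ≤ ∫ q : Torus n × Fin M, δ ∂(μ.prod U) := integral_mono integ (integrable_const _) hb
      _ = δ := by simp

lemma eq_of_close (hp : 1 ≤ p) (μ ν : Measure (Torus n)) [IsProbabilityMeasure μ]
    [IsProbabilityMeasure ν]
    (h : ∀ δ > 0, ∃ ρ : Measure (Torus n), IsProbabilityMeasure ρ ∧ Cst p μ ρ ≤ δ ∧ Cst p ν ρ ≤ δ) :
    μ = ν := by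
  have hp0 : 0 ≤ p := by linarith
  apply ext_of_forall_integral_eq_of_IsFiniteMeasure
  intro f
  have huc := CompactSpace.uniformContinuous_of_continuous f.continuous
  have key : ∀ e > 0, |∫ x, f x ∂μ - ∫ x, f x ∂ν| ≤ 4 * e := by
    intro e he
    obtain ⟨r, hr, hfr⟩ := Metric.uniformContinuous_iff.mp huc e he
    set K := 2 * ‖f‖ / r ^ p with hK
    have hrp : 0 < r ^ p := Real.rpow_pos_of_pos hr _
    have hK0 : 0 ≤ K := by positivity
    have hpt : ∀ a b : Torus n, |f a - f b| ≤ e + K * torusDist a b ^ p := by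
      intro a b
      have htn : 0 ≤ torusDist a b ^ p := Real.rpow_nonneg (td_nonneg _ _) _
      by_cases hab : dist a b < r
      · have := hfr hab
        rw [Real.dist_eq] at this
        have : 0 ≤ K * torusDist a b ^ p := by positivity
        linarith
      · push Not at hab
        have h1 : r ^ p ≤ torusDist a b ^ p :=
          Real.rpow_le_rpow hr.le (hab.trans (dist_le_td a b)) hp0
        have h2 : |f a - f b| ≤ 2 * ‖f‖ := by
          have := f.dist_le_two_norm a b
          rwa [Real.dist_eq] at this
        have h3 : 2 * ‖f‖ ≤ K * torusDist a b ^ p := by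
          calc 2 * ‖f‖ = K * r ^ p := by rw [hK]; field_simp
            _ ≤ _ := by gcongr
        linarith
    have hcp : ∀ (μ' ρ : Measure (Torus n)) (π : Measure (Torus n × Torus n)), IsCpl π μ' ρ →
        |∫ x, f x ∂μ' - ∫ x, f x ∂ρ| ≤ e + K * cost p π := by
      intro μ' ρ π hπ
      have := hπ.1
      rw [← hπ.integral_fst f.continuous.measurable, ← hπ.integral_snd f.continuous.measurable]
      have i1 : Integrable (fun q : Torus n × Torus n => f q.1) π :=
        integrable_of_cont π (f.continuous.comp continuous_fst)
      have i2 : Integrable (fun q : Torus n × Torus n => f q.2) π :=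
        integrable_of_cont π (f.continuous.comp continuous_snd)
      rw [← integral_sub i1 i2]
      refine (abs_integral_le_integral_abs).trans ?_
      have i3 := (integrable_cost hp0 π).const_mul K
      calc ∫ q, |f q.1 - f q.2| ∂π ≤ ∫ q, (e + K * torusDist q.1 q.2 ^ p) ∂π :=
            integral_mono (i1.sub i2).abs ((integrable_const e).add i3) fun q => hpt _ _
        _ = e + K * cost p π := by
            rw [integral_add (integrable_const e) i3, integral_const_mul]
            simp [cost]
    set δ := e / (2 * (K + 1)) with hδ
    have hδ0 : 0 < δ := by positivity
    obtain ⟨ρ, hρ, h1, h2⟩ := h δ hδ0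
    obtain ⟨π1, c1, l1⟩ := exists_cpl_lt (show Cst p μ ρ < 2 * δ by linarith)
    obtain ⟨π2, c2, l2⟩ := exists_cpl_lt (show Cst p ν ρ < 2 * δ by linarith)
    have a1 := hcp _ _ _ c1
    have a2 := hcp _ _ _ c2
    have hKδ : K * (2 * δ) ≤ e := by
      have : (K + 1) * (2 * δ) = e := by rw [hδ]; field_simp
      nlinarith
    have b1 : K * cost p π1 ≤ e := (mul_le_mul_of_nonneg_left l1.le hK0).trans hKδ
    have b2 : K * cost p π2 ≤ e := (mul_le_mul_of_nonneg_left l2.le hK0).trans hKδ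
    rw [abs_le] at a1 a2 ⊢
    constructor <;> linarith [a1.1, a1.2, a2.1, a2.2]
  have h0 : |∫ x, f x ∂μ - ∫ x, f x ∂ν| ≤ 0 := by
    apply le_of_forall_pos_le_add
    intro e he
    have := key (e / 4) (by positivity)
    linarith
  exact sub_eq_zero.mp (abs_nonpos_iff.mp h0)

/-- If `Φ` fixes Diracs and antipodal two-point measures, it is the identity. -/
lemma id_of_fix (hn : 2 ≤ n) (hp : 1 ≤ p) (Φ : Measure (Torus n) → Measure (Torus n))
    (hprob : ∀ μ, IsProbabilityMeasure μ → IsProbabilityMeasure (Φ μ))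
    (hC : ∀ μ ν, IsProbabilityMeasure μ → IsProbabilityMeasure ν → Cst p (Φ μ) (Φ ν) = Cst p μ ν)
    (hδ : ∀ x, Φ (Measure.dirac x) = Measure.dirac x)
    {ε : ℝ} (hε : 0 < ε)
    (hη : ∀ x m, 0 ≤ m → m ≤ ε → m ≤ 1 → Φ (eta x m) = eta x m)
    (μ : Measure (Torus n)) (hμ : IsProbabilityMeasure μ) : Φ μ = μ := by
  have hp0 : 0 ≤ p := by linarith
  have := hprob μ hμ
  apply eq_of_close hp
  intro δ hδ0
  obtain ⟨ρ, hρ, ⟨S, hS, hSρ⟩, hat, hc⟩ := exists_approx hn hp μ hε hδ0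
  have hΦρ : Φ ρ = ρ := by
    have := hprob ρ hρ
    symm
    apply eq_of_atoms_le hS hSρ
    intro x _
    have h0 : 0 ≤ ρ.real {x} := measureReal_nonneg
    have h1 : ρ.real {x} ≤ 1 := measureReal_le_one
    apply detect_lower hn hp (Φ ρ) x h0 h1
    have e1 : pot p (Φ ρ) (anti x) = pot p ρ (anti x) := by
      rw [← Cst_dirac hp0, ← Cst_dirac hp0, ← hC ρ _ hρ inferInstance, hδ]
    have e2 : Cst p (Φ ρ) (eta x (ρ.real {x})) = Cst p ρ (eta x (ρ.real {x})) := by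
      rw [← hC ρ _ hρ (eta_prob x h0 h1), hη x _ h0 (hat x) h1]
    rw [e1, e2]
    exact detect_upper hn hp ρ x
  refine ⟨ρ, hρ, ?_, hc⟩
  rw [← hΦρ, hC μ ρ hμ hρ]
  exact hc

end WT

open scoped Topology
namespace WT
variable {n : ℕ} {p : ℝ}

lemma fix_of_two_lt (hn : 2 ≤ n) (hp : 2 < p) (x : Torus n) {m : ℝ} (h0 : 0 ≤ m) (h1 : m ≤ 1)
    {ν : Measure (Torus n)} [IsProbabilityMeasure ν]
    (hm : ∀ z, pot p ν z = pot p (eta x m) z) : ν = eta x m := by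
  have hp0 : 0 ≤ p := by linarith
  have hD := D_pos hn
  apply eq_eta_of_pot hn (by linarith) x h0 h1 _ hm
  have hpow : ∀ a : ℝ, 0 ≤ a → a ^ p = a ^ 2 * a ^ (p - 2) := by
    intro a ha
    rw [← Real.rpow_natCast, ← Real.rpow_add_of_nonneg ha (by norm_num) (by linarith)]
    congr 1; push_cast; ring
  have hDp : 0 < D n ^ (p - 2) := Real.rpow_pos_of_pos hD _
  have hmono : ∀ y z : Torus n, torusDist y z ^ p ≤ torusDist y z ^ 2 * D n ^ (p - 2) := by
    intro y z
    rw [hpow _ (td_nonneg _ _)]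
    exact mul_le_mul_of_nonneg_left (Real.rpow_le_rpow (td_nonneg _ _) (td_le _ _) (by linarith))
      (sq_nonneg _)
  have hsq : ∀ y, (torusDist y x ^ 2 + torusDist y (anti x) ^ 2) * D n ^ (p - 2) ≤ D n ^ p := by
    intro y
    rw [hpow _ hD.le, D_sq]
    exact mul_le_mul_of_nonneg_right (sq_sum_le x y) hDp.le
  have i1 := integrable_of_cont ν (costfun_cont_left hp0 x)
  have i2 := integrable_of_cont ν (costfun_cont_left hp0 (anti x))
  have hle : ∀ y, torusDist y x ^ p + torusDist y (anti x) ^ p ≤ D n ^ p := by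
    intro y
    have := hmono y x; have := hmono y (anti x); have := hsq y
    linarith
  have integ : D n ^ p ≤ ∫ y, (torusDist y x ^ p + torusDist y (anti x) ^ p) ∂ν := by
    rw [integral_add i1 i2]
    have e1 := hm x
    have e2 := hm (anti x)
    unfold pot at e1 e2
    rw [e1, e2, integral_eta x h0 h1, integral_eta x h0 h1, td_self, td_self, td_anti, td_comm, td_anti,
      Real.zero_rpow (by linarith)]
    linarith
  filter_upwards [ae_eq_of_le_integral (i1.add i2) hle integ] with y hy
  simp only [Pi.add_apply] at hy
  have a1 := hmono y x
  have a2 := hmono y (anti x)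
  have a3 := hsq y
  have a4 : torusDist y x ^ p = torusDist y x ^ 2 * D n ^ (p - 2) := by linarith
  rw [hpow _ (td_nonneg _ _)] at a4
  by_cases hz : torusDist y x = 0
  · left; exact td_eq_zero hz
  · right
    have a5 := mul_left_cancel₀ (pow_ne_zero 2 hz) a4
    rw [Real.rpow_left_inj (td_nonneg _ _) hD.le (by linarith)] at a5
    exact td_eq_D a5

/-! ### The kink argument, `p < 2` -/

lemma kink_real {A : ℝ} (hA : 0 ≤ A) (hp : 1 ≤ p) (t : AddCircle (1 : ℝ)) :
    ∃ l : ℝ, Tendsto (fun h : ℝ => (2 * (A + ‖t‖ ^ 2) ^ (p / 2)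
        - (A + ‖t - (h : AddCircle (1 : ℝ))‖ ^ 2) ^ (p / 2)
        - (A + ‖t + (h : AddCircle (1 : ℝ))‖ ^ 2) ^ (p / 2)) / h) (𝓝[>] 0) (𝓝 l) ∧
      (t ≠ half → l ≤ 0) ∧ (t = half → l = p * (A + 1 / 4) ^ (p / 2 - 1)) ∧
      (t ≠ half → 0 < A → l = 0) := by
  by_cases ht : t = half
  · subst ht
    refine ⟨p * (A + 1 / 4) ^ (p / 2 - 1), ?_, fun h => absurd rfl h, fun _ => rfl,
      fun h => absurd rfl h⟩
    have hd : HasDerivAt (fun s : ℝ => (A + (1 / 2 - s) ^ 2) ^ (p / 2))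
        (-(p / 2 * (A + 1 / 4) ^ (p / 2 - 1))) 0 := by
      have h1 : HasDerivAt (fun s : ℝ => A + (1 / 2 - s) ^ 2) (-1) 0 := by
        exact ((((hasDerivAt_id (0 : ℝ)).const_sub (1 / 2)).pow 2).const_add A).congr_deriv
          (by norm_num)
      have h2 := h1.rpow_const (p := p / 2) (Or.inl (by
        have : (0:ℝ) < A + (1 / 2 - 0) ^ 2 := by positivity
        exact this.ne'))
      convert h2 using 1
      norm_num
    have hs := (hasDerivAt_iff_tendsto_slope_zero.mp hd).mono_left
      (nhdsWithin_mono (0 : ℝ) (fun h (hh : 0 < h) => hh.ne'))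
    have hs2 := hs.const_mul (-2)
    have e : (-2 : ℝ) * (-(p / 2 * (A + 1 / 4) ^ (p / 2 - 1))) = p * (A + 1 / 4) ^ (p / 2 - 1) := by
      ring
    rw [e] at hs2
    refine hs2.congr' ?_
    have hsmall : ∀ᶠ h : ℝ in 𝓝[>] 0, h < 1 / 2 :=
      nhdsWithin_le_nhds (Iio_mem_nhds (by norm_num))
    filter_upwards [hsmall, self_mem_nhdsWithin] with h hh hpos
    have hpos' : 0 < h := hpos
    have n1 : ‖half + (h : AddCircle (1 : ℝ))‖ = 1 / 2 - h := by
      rw [add_comm, norm_add_half, norm_coe (by rw [abs_of_pos hpos']; linarith), abs_of_pos hpos']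
    have n2 : ‖half - (h : AddCircle (1 : ℝ))‖ = 1 / 2 - h := by
      rw [← norm_neg, neg_sub, sub_eq_add_neg, neg_half, norm_add_half,
        norm_coe (by rw [abs_of_pos hpos']; linarith), abs_of_pos hpos']
    rw [n1, n2, norm_half]
    simp only [zero_add, sub_zero, smul_eq_mul]
    field_simp
    ring
  · obtain ⟨τ, hτ, rfl⟩ := exists_rep t
    have hτ' : |τ| < 1 / 2 := by
      refine lt_of_le_of_ne hτ fun h => ht (norm_eq_half ?_)
      rw [norm_coe hτ, h]
    have hτ2 := abs_lt.mp hτ'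
    have hform : ∀ᶠ h : ℝ in 𝓝[>] 0, (2 * (A + τ ^ 2) ^ (p / 2)
        - (A + (τ - h) ^ 2) ^ (p / 2) - (A + (τ + h) ^ 2) ^ (p / 2)) / h =
        (2 * (A + ‖(τ : AddCircle (1 : ℝ))‖ ^ 2) ^ (p / 2)
        - (A + ‖(τ : AddCircle (1 : ℝ)) - (h : AddCircle (1 : ℝ))‖ ^ 2) ^ (p / 2)
        - (A + ‖(τ : AddCircle (1 : ℝ)) + (h : AddCircle (1 : ℝ))‖ ^ 2) ^ (p / 2)) / h := by
      have hsmall : ∀ᶠ h : ℝ in 𝓝[>] 0, h < 1 / 2 - |τ| :=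
        nhdsWithin_le_nhds (Iio_mem_nhds (by linarith))
      filter_upwards [hsmall, self_mem_nhdsWithin] with h hh hpos
      have hpos' : 0 < h := hpos
      have b1 : |τ - h| ≤ 1 / 2 := by
        have := abs_sub τ h
        rw [abs_of_pos hpos'] at this; linarith
      have b2 : |τ + h| ≤ 1 / 2 := by
        have := abs_add_le τ h
        rw [abs_of_pos hpos'] at this; linarith
      rw [← AddCircle.coe_sub, ← AddCircle.coe_add, norm_coe hτ, norm_coe b1, norm_coe b2]
      simp only [sq_abs]
    by_cases h0 : A + τ ^ 2 = 0
    · have hA0 : A = 0 := by nlinarith [sq_nonneg τ]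
      have hτ0 : τ = 0 := by
        have : τ ^ 2 = 0 := by nlinarith [sq_nonneg τ]
        simpa using this
      refine ⟨-2 * 0 ^ (p - 1), ?_, fun _ => ?_, fun h => absurd h ht, fun _ h => absurd hA0 h.ne'⟩
      · refine Tendsto.congr' hform ?_
        subst hA0 hτ0
        have hc : Tendsto (fun h : ℝ => -2 * h ^ (p - 1)) (𝓝[>] 0) (𝓝 (-2 * 0 ^ (p - 1))) := by
          apply Tendsto.const_mul
          exact ((Real.continuousAt_rpow_const 0 (p - 1) (Or.inr (by linarith))).tendsto).mono_left
            nhdsWithin_le_nhds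
        refine hc.congr' ?_
        filter_upwards [self_mem_nhdsWithin] with h hpos
        have hpos' : 0 < h := hpos
        have e1 : (h ^ 2) ^ (p / 2) = h ^ p := by
          rw [← Real.rpow_natCast, ← Real.rpow_mul hpos'.le]
          congr 1; push_cast; ring
        have e2 : h ^ p = h ^ (p - 1) * h := by
          rw [← Real.rpow_add_one hpos'.ne']; congr 1; ring
        simp only [zero_sub, zero_add, neg_sq, e1]
        rw [e2]
        rw [zero_pow two_ne_zero, Real.zero_rpow (by linarith)]
        field_simp
        ring
      · have : (0:ℝ) ≤ 0 ^ (p - 1) := Real.rpow_nonneg le_rfl _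
        linarith
    · refine ⟨0, ?_, fun _ => le_rfl, fun h => absurd h ht, fun _ _ => rfl⟩
      refine Tendsto.congr' hform ?_
      have hd : ∃ d, HasDerivAt (fun s : ℝ => (A + s ^ 2) ^ (p / 2)) d τ := by
        have h1 : HasDerivAt (fun s : ℝ => A + s ^ 2) (2 * τ) τ := by
          exact (((hasDerivAt_id τ).pow 2).const_add A).congr_deriv (by simp)
        exact ⟨_, h1.rpow_const (Or.inl h0)⟩
      obtain ⟨d, hd⟩ := hd
      have hd1 : HasDerivAt (fun s : ℝ => (A + (τ + s) ^ 2) ^ (p / 2)) d 0 :=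
        HasDerivAt.comp_const_add (f := fun s : ℝ => (A + s ^ 2) ^ (p / 2)) τ 0 (by simpa using hd)
      have hd2 : HasDerivAt (fun s : ℝ => (A + (τ - s) ^ 2) ^ (p / 2)) (-d) 0 :=
        HasDerivAt.comp_const_sub (f := fun s : ℝ => (A + s ^ 2) ^ (p / 2)) τ 0 (by simpa using hd)
      have hs := (hasDerivAt_iff_tendsto_slope_zero.mp (hd1.add hd2)).mono_left
        (nhdsWithin_mono (0 : ℝ) (fun h (hh : 0 < h) => hh.ne'))
      have hs2 := hs.const_mul (-1)
      rw [add_neg_cancel, mul_zero] at hs2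
      refine hs2.congr' ?_
      filter_upwards [self_mem_nhdsWithin] with h hpos
      have hpos' : 0 < h := hpos
      simp only [zero_add, sub_zero, add_zero, smul_eq_mul, Pi.add_apply]
      field_simp
      ring

lemma rpow_lip {a b M : ℝ} (ha : 0 ≤ a) (hab : a ≤ b) (hb : b ≤ M) (hp : 1 ≤ p) :
    b ^ p - a ^ p ≤ p * M ^ (p - 1) * (b - a) := by
  rcases (ha.trans hab).eq_or_lt with h | h
  · have : a = 0 := le_antisymm (h ▸ hab) ha
    subst this; subst h; simp
  · have hbern := one_add_mul_self_le_rpow_one_add (s := a / b - 1)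
      (by have : 0 ≤ a / b := by positivity
          linarith) hp
    rw [add_sub_cancel, Real.div_rpow ha h.le, le_div_iff₀ (Real.rpow_pos_of_pos h _)] at hbern
    have e2 : b ^ p = b ^ (p - 1) * b := by
      rw [← Real.rpow_add_one h.ne']; congr 1; ring
    have h1 : b ^ p - a ^ p ≤ p * b ^ (p - 1) * (b - a) := by
      have : (1 + p * (a / b - 1)) * b ^ p = b ^ p - p * b ^ (p - 1) * (b - a) := by
        rw [e2]; field_simp; ring
      linarith
    refine h1.trans ?_
    have : b ^ (p - 1) ≤ M ^ (p - 1) := Real.rpow_le_rpow h.le hb (by linarith)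
    have h3 : 0 ≤ b - a := by linarith
    gcongr

lemma td_rpow_lip (hp : 1 ≤ p) (y z w : Torus n) :
    |torusDist y z ^ p - torusDist y w ^ p| ≤ p * D n ^ (p - 1) * torusDist z w := by
  have hK : 0 ≤ p * D n ^ (p - 1) :=
    mul_nonneg (by linarith) (Real.rpow_nonneg (Real.sqrt_nonneg _) _)
  have t1 := td_triangle y z w
  have t2 := td_triangle y w z
  rw [td_comm w z] at t2
  rcases le_total (torusDist y z) (torusDist y w) with h | h
  · have := rpow_lip (td_nonneg y z) h (td_le y w) hp
    have h4 : torusDist y z ^ p ≤ torusDist y w ^ p := Real.rpow_le_rpow (td_nonneg _ _) h (by linarith)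
    rw [abs_of_nonpos (by linarith)]
    have : p * D n ^ (p - 1) * (torusDist y w - torusDist y z) ≤ p * D n ^ (p - 1) * torusDist z w :=
      mul_le_mul_of_nonneg_left (by linarith) hK
    linarith
  · have := rpow_lip (td_nonneg y w) h (td_le y z) hp
    have h4 : torusDist y w ^ p ≤ torusDist y z ^ p := Real.rpow_le_rpow (td_nonneg _ _) h (by linarith)
    rw [abs_of_nonneg (by linarith)]
    have : p * D n ^ (p - 1) * (torusDist y z - torusDist y w) ≤ p * D n ^ (p - 1) * torusDist z w :=
      mul_le_mul_of_nonneg_left (by linarith) hK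
    linarith

lemma td_update_rpow (i : Fin n) (y z : Torus n) (w : AddCircle (1 : ℝ)) :
    torusDist y (Function.update z i w) ^ p =
      ((∑ k ∈ Finset.univ.erase i, ‖y k - z k‖ ^ 2) + ‖y i - w‖ ^ 2) ^ (p / 2) := by
  have h : torusDist y (Function.update z i w) ^ 2 =
      (∑ k ∈ Finset.univ.erase i, ‖y k - z k‖ ^ 2) + ‖y i - w‖ ^ 2 := by
    rw [td_sq, ← Finset.sum_erase_add _ _ (Finset.mem_univ i)]
    congr 1
    · refine Finset.sum_congr rfl fun k hk => ?_
      rw [Function.update_of_ne (Finset.ne_of_mem_erase hk)]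
    · simp
  rw [← h, ← Real.rpow_natCast, ← Real.rpow_mul (td_nonneg _ _)]
  congr 1; push_cast; ring

lemma td_update_self (i : Fin n) (z : Torus n) (w : AddCircle (1 : ℝ)) :
    torusDist z (Function.update z i w) = ‖z i - w‖ := by
  have h : torusDist z (Function.update z i w) ^ 2 = ‖z i - w‖ ^ 2 := by
    rw [td_sq, ← Finset.sum_erase_add _ _ (Finset.mem_univ i)]
    rw [Finset.sum_eq_zero, zero_add]
    · simp
    · intro k hk
      rw [Function.update_of_ne (Finset.ne_of_mem_erase hk)]; simp
  exact (pow_left_inj₀ (td_nonneg _ _) (norm_nonneg _) two_ne_zero).mp h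

lemma norm_coe_le (h : ℝ) : ‖(h : AddCircle (1 : ℝ))‖ ≤ |h| := by
  by_cases hh : |h| ≤ 1 / 2
  · exact (norm_coe hh).le
  · exact (norm_le_half _).trans (not_le.mp hh).le

lemma kink (hp : 1 ≤ p) (i : Fin n) (z : Torus n) :
    ∃ G : Torus n → ℝ,
      (∀ μ : Measure (Torus n), IsProbabilityMeasure μ → Integrable G μ) ∧
      (∀ μ ν : Measure (Torus n), IsProbabilityMeasure μ → IsProbabilityMeasure ν →
        (∀ w, pot p μ w = pot p ν w) → ∫ y, G y ∂μ = ∫ y, G y ∂ν) ∧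
      (∀ y, y i - z i ≠ half → G y ≤ 0) ∧
      (∀ y, y i - z i = half → G y =
        p * ((∑ k ∈ Finset.univ.erase i, ‖y k - z k‖ ^ 2) + 1 / 4) ^ (p / 2 - 1)) ∧
      (∀ y, y i - z i ≠ half → 0 < (∑ k ∈ Finset.univ.erase i, ‖y k - z k‖ ^ 2) → G y = 0) := by
  have hp0 : 0 ≤ p := by linarith
  have hex := fun y : Torus n => kink_real (p := p)
    (A := ∑ k ∈ Finset.univ.erase i, ‖y k - z k‖ ^ 2) (by positivity) hp (y i - z i)
  choose G hG1 hG2 hG3 hG4 using hex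
  set F : ℝ → Torus n → ℝ := fun h y => (2 * torusDist y z ^ p
    - torusDist y (Function.update z i (z i + (h : AddCircle (1 : ℝ)))) ^ p
    - torusDist y (Function.update z i (z i - (h : AddCircle (1 : ℝ)))) ^ p) / h with hF
  have hFt : ∀ y, Tendsto (fun h => F h y) (𝓝[>] 0) (𝓝 (G y)) := by
    intro y
    refine (hG1 y).congr fun h => ?_
    simp only [hF]
    have e0 : torusDist y z ^ p = torusDist y (Function.update z i (z i)) ^ p := by simp
    rw [e0, td_update_rpow, td_update_rpow, td_update_rpow]
    rw [sub_add_eq_sub_sub, sub_sub_eq_add_sub, add_sub_right_comm]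
  have hFc : ∀ h, Continuous (F h) := by
    intro h
    simp only [hF]
    exact (((continuous_const.mul (costfun_cont_left hp0 _)).sub (costfun_cont_left hp0 _)).sub
      (costfun_cont_left hp0 _)).div_const _
  set K := p * D n ^ (p - 1) with hK
  have hK0 : 0 ≤ K :=
    mul_nonneg (by linarith) (Real.rpow_nonneg (Real.sqrt_nonneg _) _)
  have hFb : ∀ h : ℝ, 0 < h → ∀ y, ‖F h y‖ ≤ 2 * K := by
    intro h hh y
    have b1 := td_rpow_lip hp y z (Function.update z i (z i + (h : AddCircle (1 : ℝ))))
    have b2 := td_rpow_lip hp y z (Function.update z i (z i - (h : AddCircle (1 : ℝ))))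
    have nh := norm_coe_le h
    rw [abs_of_pos hh] at nh
    rw [td_update_self, sub_add_cancel_left, norm_neg] at b1
    rw [td_update_self, sub_sub_cancel] at b2
    have b3 : K * ‖(h : AddCircle (1 : ℝ))‖ ≤ K * h := mul_le_mul_of_nonneg_left nh hK0
    have b4 := abs_le.mp (b1.trans b3)
    have b5 := abs_le.mp (b2.trans b3)
    simp only [hF, Real.norm_eq_abs, abs_div, abs_of_pos hh]
    rw [div_le_iff₀ hh, abs_le]
    constructor <;> linarith [b4.1, b4.2, b5.1, b5.2]
  have hGm : Measurable G :=
    measurable_of_tendsto_metrizable' (𝓝[>] (0:ℝ)) (fun h => (hFc h).measurable)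
      (tendsto_pi_nhds.mpr hFt)
  have hGb : ∀ y, ‖G y‖ ≤ 2 * K := fun y =>
    le_of_tendsto (hFt y).norm (by
      filter_upwards [self_mem_nhdsWithin] with h hh
      exact hFb h hh y)
  have hlim : ∀ μ : Measure (Torus n), IsProbabilityMeasure μ →
      Tendsto (fun h => ∫ y, F h y ∂μ) (𝓝[>] 0) (𝓝 (∫ y, G y ∂μ)) := by
    intro μ _
    refine tendsto_integral_filter_of_dominated_convergence (fun _ => 2 * K)
      (Eventually.of_forall fun h => (hFc h).aestronglyMeasurable) ?_ (integrable_const _)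
      (ae_of_all _ hFt)
    filter_upwards [self_mem_nhdsWithin] with h hh
    exact ae_of_all _ (hFb h hh)
  refine ⟨G, fun μ _ => Integrable.of_bound hGm.aestronglyMeasurable _ (ae_of_all _ hGb), ?_,
    hG2, hG3, hG4⟩
  intro μ ν hμ hν hpot
  have hFpot : ∀ (ρ : Measure (Torus n)), IsProbabilityMeasure ρ → ∀ h, ∫ y, F h y ∂ρ =
      (2 * pot p ρ z - pot p ρ (Function.update z i (z i + (h : AddCircle (1 : ℝ))))
      - pot p ρ (Function.update z i (z i - (h : AddCircle (1 : ℝ))))) / h := by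
    intro ρ _ h
    have ii := fun w : Torus n => integrable_of_cont ρ (costfun_cont_left hp0 w)
    have i2 : Integrable (fun y => 2 * torusDist y z ^ p) ρ := (ii z).const_mul 2
    have i3 : Integrable (fun y => 2 * torusDist y z ^ p -
      torusDist y (Function.update z i (z i + (h : AddCircle (1 : ℝ)))) ^ p) ρ := i2.sub (ii _)
    simp only [hF]
    rw [integral_div, integral_sub i3 (ii _), integral_sub i2 (ii _), integral_const_mul]
    rfl
  refine tendsto_nhds_unique (hlim μ hμ) ?_
  refine (hlim ν hν).congr fun h => ?_
  rw [hFpot μ hμ, hFpot ν hν, hpot, hpot, hpot]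

lemma fix_of_lt_two (hn : 2 ≤ n) (hp : 1 ≤ p) (hp2 : p < 2) (x : Torus n) {m : ℝ} (h0 : 0 ≤ m)
    (h1 : m ≤ 1) {ν : Measure (Torus n)} [IsProbabilityMeasure ν]
    (hm : ∀ z, pot p ν z = pot p (eta x m) z) : ν = eta x m := by
  apply eq_eta_of_pot hn hp x h0 h1 _ hm
  have hηp := eta_prob x h0 h1
  set i : Fin n := ⟨0, by omega⟩ with hi
  set j : Fin n := ⟨1, by omega⟩ with hj
  have hji : j ≠ i := by simp [hi, hj]
  set L : ℝ := p * (1 / 4) ^ (p / 2 - 1) with hL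
  have hL0 : 0 < L := mul_pos (by linarith) (Real.rpow_pos_of_pos (by norm_num) _)
  -- for every point `a` a function peaking exactly at `a`
  have peak : ∀ a : Torus n, ∃ G : Torus n → ℝ,
      (∀ μ : Measure (Torus n), IsProbabilityMeasure μ → Integrable G μ) ∧
      (∫ y, G y ∂ν = ∫ y, G y ∂(eta x m)) ∧
      (∀ y, y i ≠ a i → G y ≤ 0) ∧ (∀ y, G y ≤ L) ∧ (∀ y, G y = L → y = a) ∧ G a = L ∧
      G (anti a) = 0 := by
    intro a
    set z : Torus n := Function.update a i (a i + half) with hz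
    obtain ⟨G, g1, g2, g3, g4, g5⟩ := kink hp i z
    have hzi : ∀ y : Torus n, y i - z i = half ↔ y i = a i := by
      intro y
      simp only [hz, Function.update_self]
      constructor
      · intro h
        have : y i = half + (a i + half) := sub_eq_iff_eq_add.mp h
        rw [this, add_comm (a i), ← add_assoc, half_add_half, zero_add]
      · intro h
        rw [h, sub_add_cancel_left, neg_half]
    have hsum : ∀ y : Torus n, (∑ k ∈ Finset.univ.erase i, ‖y k - z k‖ ^ 2) =
        ∑ k ∈ Finset.univ.erase i, ‖y k - a k‖ ^ 2 := by
      intro y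
      refine Finset.sum_congr rfl fun k hk => ?_
      rw [hz, Function.update_of_ne (Finset.ne_of_mem_erase hk)]
    have hlt : ∀ A : ℝ, 0 < A → p * (A + 1 / 4) ^ (p / 2 - 1) < L := by
      intro A hA
      rw [hL]
      have := Real.rpow_lt_rpow_of_neg (x := 1 / 4) (y := A + 1 / 4) (z := p / 2 - 1)
        (by norm_num) (by linarith) (by linarith)
      exact mul_lt_mul_of_pos_left this (by linarith)
    have hS0 : ∀ y : Torus n, 0 ≤ ∑ k ∈ Finset.univ.erase i, ‖y k - a k‖ ^ 2 := fun y => by positivity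
    refine ⟨G, g1, g2 _ _ inferInstance inferInstance hm, ?_, ?_, ?_, ?_, ?_⟩
    · intro y hy
      exact g3 y (fun h => hy ((hzi y).mp h))
    · intro y
      by_cases hy : y i = a i
      · rw [g4 y ((hzi y).mpr hy), hsum]
        rcases (hS0 y).eq_or_lt with h | h
        · rw [← h, zero_add]
        · exact (hlt _ h).le
      · exact (g3 y (fun h => hy ((hzi y).mp h))).trans hL0.le
    · intro y hy
      by_cases hya : y i = a i
      · rw [g4 y ((hzi y).mpr hya), hsum] at hy
        rcases (hS0 y).eq_or_lt with h | h
        · have h' := (Finset.sum_eq_zero_iff_of_nonneg (fun _ _ => by positivity)).mp h.symm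
          funext k
          by_cases hk : k = i
          · rw [hk, hya]
          · have := h' k (Finset.mem_erase.mpr ⟨hk, Finset.mem_univ _⟩)
            rw [sq_eq_zero_iff, norm_eq_zero] at this
            exact sub_eq_zero.mp this
        · exact absurd hy (hlt _ h).ne
      · have := g3 y (fun h => hya ((hzi y).mp h))
        linarith
    · rw [g4 a ((hzi a).mpr rfl), hsum]
      simp [hL]
    · apply g5
      · intro h
        exact add_half_ne _ ((hzi _).mp h)
      · rw [hsum]
        apply Finset.sum_pos' (fun _ _ => by positivity)
        refine ⟨j, Finset.mem_erase.mpr ⟨hji, Finset.mem_univ _⟩, ?_⟩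
        simp only [anti, add_sub_cancel_left, norm_half]
        norm_num
  obtain ⟨G1, a1, a2, a3, a4, a5, a6, a7⟩ := peak x
  obtain ⟨G2, b1, b2, b3, b4, b5, b6, b7⟩ := peak (anti x)
  rw [anti_anti] at b7
  rw [integral_eta x h0 h1] at a2 b2
  have hle : ∀ y, G1 y + G2 y ≤ L := by
    intro y
    by_cases hy : y i = x i
    · have : y i ≠ anti x i := by
        rw [hy]; exact (add_half_ne _).symm
      linarith [a4 y, b3 y this]
    · linarith [b4 y, a3 y hy]
  have integ : L ≤ ∫ y, (G1 y + G2 y) ∂ν := by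
    rw [integral_add (a1 ν inferInstance) (b1 ν inferInstance), a2, b2, a6, a7, b6, b7]
    linarith
  filter_upwards [ae_eq_of_le_integral ((a1 ν inferInstance).add (b1 ν inferInstance)) hle integ]
    with y hy
  simp only [Pi.add_apply] at hy
  by_cases hyx : y i = x i
  · left
    have : y i ≠ anti x i := by
      rw [hyx]; exact (add_half_ne _).symm
    apply a5
    linarith [a4 y, b3 y this]
  · right
    apply b5
    linarith [b4 y, a3 y hyx]

end WT

open scoped Topology
namespace WT
variable {n : ℕ} {p : ℝ}

/-! ### The case `p = 2` -/

open Classical in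
/-- Indicator of the `k`-th coordinate being antipodal to that of `b`. -/
noncomputable def sv (b : Torus n) (k : Fin n) (y : Torus n) : ℝ :=
  if y k = b k + half then 1 else 0

lemma sv_zo (b : Torus n) (k : Fin n) (y : Torus n) : sv b k y = 0 ∨ sv b k y = 1 := by
  unfold sv; split_ifs <;> simp

lemma sv_nonneg (b : Torus n) (k : Fin n) (y : Torus n) : 0 ≤ sv b k y := by
  rcases sv_zo b k y with h | h <;> rw [h] <;> norm_num

lemma sv_le (b : Torus n) (k : Fin n) (y : Torus n) : sv b k y ≤ 1 := by
  rcases sv_zo b k y with h | h <;> rw [h] <;> norm_num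

lemma coord_meas (k : Fin n) (t : AddCircle (1 : ℝ)) : MeasurableSet {y : Torus n | y k = t} :=
  measurableSet_eq_fun (measurable_pi_apply k) measurable_const

lemma sv_meas (b : Torus n) (k : Fin n) : Measurable (sv b k) := by
  unfold sv
  exact Measurable.ite (coord_meas k (b k + half))
    measurable_const measurable_const

lemma sv_int (b : Torus n) (k : Fin n) (ν : Measure (Torus n)) [IsProbabilityMeasure ν] :
    Integrable (sv b k) ν :=
  Integrable.of_bound (sv_meas b k).aestronglyMeasurable 1 (ae_of_all _ fun y => by
    rw [Real.norm_eq_abs, abs_of_nonneg (sv_nonneg b k y)]; exact sv_le b k y)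

lemma sv_mul_int (b : Torus n) (i j : Fin n) (ν : Measure (Torus n)) [IsProbabilityMeasure ν] :
    Integrable (fun y => sv b i y * sv b j y) ν :=
  Integrable.of_bound ((sv_meas b i).mul (sv_meas b j)).aestronglyMeasurable 1
    (ae_of_all _ fun y => by
    rw [Real.norm_eq_abs, abs_of_nonneg (mul_nonneg (sv_nonneg b i y) (sv_nonneg b j y))]
    exact mul_le_one₀ (sv_le b i y) (sv_nonneg b j y) (sv_le b j y))

lemma sv_pair_int (b : Torus n) (k : Fin n) (π : Measure (Torus n × Torus n))
    [IsProbabilityMeasure π] : Integrable (fun q => sv b k q.1 * sv b k q.2) π :=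
  Integrable.of_bound (((sv_meas b k).comp measurable_fst).mul
    ((sv_meas b k).comp measurable_snd)).aestronglyMeasurable 1 (ae_of_all _ fun q => by
    rw [Real.norm_eq_abs, abs_of_nonneg (mul_nonneg (sv_nonneg b k q.1) (sv_nonneg b k q.2))]
    exact mul_le_one₀ (sv_le b k q.1) (sv_nonneg b k q.2) (sv_le b k q.2))

/-- Vertices of the cube based at `b`. -/
def Vx (b y : Torus n) : Prop := ∀ k, y k = b k ∨ y k = b k + half

lemma sv_of_eq {b y : Torus n} {k : Fin n} (h : y k = b k) : sv b k y = 0 := by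
  unfold sv
  rw [if_neg]; rw [h]; exact (add_half_ne (b k)).symm

lemma sv_of_anti {b y : Torus n} {k : Fin n} (h : y k = b k + half) : sv b k y = 1 := by
  unfold sv
  rw [if_pos h]

lemma eq_of_sv_zero {b y : Torus n} (hy : Vx b y) {k : Fin n} (h : sv b k y = 0) : y k = b k := by
  rcases hy k with h' | h'
  · exact h'
  · rw [sv_of_anti h'] at h; norm_num at h

lemma eq_of_sv_one {b y : Torus n} {k : Fin n} (h : sv b k y = 1) :
    y k = b k + half := by
  by_contra hc
  unfold sv at h
  rw [if_neg hc] at h; norm_num at h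

lemma Vx_self (b : Torus n) : Vx b b := fun _ => Or.inl rfl

lemma Vx_anti (b : Torus n) : Vx b (anti b) := fun _ => Or.inr rfl

lemma sv_self (b : Torus n) (k : Fin n) : sv b k b = 0 := sv_of_eq rfl

lemma sv_anti (b : Torus n) (k : Fin n) : sv b k (anti b) = 1 := sv_of_anti rfl

lemma Vx_upd {b y : Torus n} (hy : Vx b y) (i : Fin n) : Vx b (Function.update b i (y i)) := by
  intro k
  by_cases h : k = i
  · subst h; simpa using hy k
  · left; simp [h]

lemma sv_upd (b y : Torus n) (i k : Fin n) :
    sv b k (Function.update b i (y i)) = if k = i then sv b i y else 0 := by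
  by_cases h : k = i
  · subst h; simp [sv]
  · rw [if_neg h, sv_of_eq]; simp [h]

lemma td_vx {b y z : Torus n} (hy : Vx b y) (hz : Vx b z) :
    torusDist y z ^ (2 : ℝ) = 1 / 4 * ∑ k, (sv b k y + sv b k z) - 1 / 2 * ∑ k, sv b k y * sv b k z := by
  rw [Real.rpow_two, td_sq, Finset.mul_sum, Finset.mul_sum, ← Finset.sum_sub_distrib]
  refine Finset.sum_congr rfl fun k _ => ?_
  rcases hy k with h | h <;> rcases hz k with h' | h'
  · rw [sv_of_eq h, sv_of_eq h', h, h']; simp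
  · rw [sv_of_eq h, sv_of_anti h', h, h', sub_add_cancel_left, neg_half, norm_half]; norm_num
  · rw [sv_of_anti h, sv_of_eq h', h, h', add_sub_cancel_left, norm_half]; norm_num
  · rw [sv_of_anti h, sv_of_anti h', h, h']; norm_num

/-- Measures on the vertices with prescribed coordinate marginals. -/
def FF (b : Torus n) (ν : Measure (Torus n)) (u : Fin n → ℝ) : Prop :=
  IsProbabilityMeasure ν ∧ (∀ᵐ y ∂ν, Vx b y) ∧ ∀ k, ∫ y, sv b k y ∂ν = u k

lemma FF_of_pot {b : Torus n} {ν ν' : Measure (Torus n)} {u : Fin n → ℝ} (h : FF b ν u)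
    (hν' : IsProbabilityMeasure ν') (hpot : ∀ z, pot 2 ν' z = pot 2 ν z) : FF b ν' u := by
  obtain ⟨h1, h2, h3⟩ := h
  have hi : ∀ (ρ : Measure (Torus n)) [IsProbabilityMeasure ρ] (z : Torus n),
      Integrable (fun y => torusDist y z ^ (2:ℝ)) ρ := fun ρ _ z =>
    integrable_of_cont ρ (costfun_cont_left (by norm_num) z)
  have hsum : pot 2 ν b + pot 2 ν (anti b) = n / 4 := by
    unfold pot
    rw [← integral_add (hi ν b) (hi ν _)]
    have : ∀ᵐ y ∂ν, torusDist y b ^ (2:ℝ) + torusDist y (anti b) ^ (2:ℝ) = n / 4 := by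
      filter_upwards [h2] with y hy
      rw [td_vx hy (Vx_self b), td_vx hy (Vx_anti b)]
      simp only [sv_self, sv_anti, Finset.sum_add_distrib]
      simp
      ring
    rw [integral_congr_ae this]; simp
  have hV : ∀ᵐ y ∂ν', Vx b y := by
    have hh : ∀ᵐ y ∂ν', torusDist y b ^ (2:ℝ) + torusDist y (anti b) ^ (2:ℝ) = n / 4 := by
      apply ae_eq_of_le_integral ((hi ν' b).add (hi ν' _))
      · intro y
        simp only [Pi.add_apply, Real.rpow_two]
        exact sq_sum_le b y
      · simp only [Pi.add_apply]
        rw [integral_add (hi ν' b) (hi ν' _)]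
        have e1 := hpot b
        have e2 := hpot (anti b)
        unfold pot at hsum e1 e2
        linarith
    filter_upwards [hh] with y hy
    rw [Real.rpow_two, Real.rpow_two, sq_sum_anti] at hy
    have h0 : ∑ k, ‖y k - b k‖ * (1 / 2 - ‖y k - b k‖) = 0 := by linarith
    rw [Finset.sum_eq_zero_iff_of_nonneg (fun k _ => mul_nonneg (norm_nonneg _)
      (by linarith [norm_le_half (y k - b k)]))] at h0
    intro k
    rcases mul_eq_zero.mp (h0 k (Finset.mem_univ k)) with h | h
    · left; exact sub_eq_zero.mp (norm_eq_zero.mp h)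
    · right
      have := norm_eq_half (t := y k - b k) (by linarith)
      rw [← this]; abel
  refine ⟨hν', hV, fun k => ?_⟩
  have key : ∀ (ρ : Measure (Torus n)) [IsProbabilityMeasure ρ], (∀ᵐ y ∂ρ, Vx b y) →
      pot 2 ρ (Function.update b k (anti b k)) - pot 2 ρ b
        = 1 / 4 - 1 / 2 * ∫ y, sv b k y ∂ρ := by
    intro ρ _ hρ
    unfold pot
    rw [← integral_sub (hi ρ _) (hi ρ b)]
    have : ∀ᵐ y ∂ρ, torusDist y (Function.update b k (anti b k)) ^ (2:ℝ) - torusDist y b ^ (2:ℝ)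
        = 1 / 4 - 1 / 2 * sv b k y := by
      filter_upwards [hρ] with y hy
      rw [td_vx hy (Vx_upd (Vx_anti b) k), td_vx hy (Vx_self b)]
      simp only [sv_self, sv_upd, sv_anti, Finset.sum_add_distrib, Finset.sum_ite_eq',
        Finset.mem_univ, if_true, mul_ite, mul_one, mul_zero, Finset.sum_const_zero]
      ring
    rw [integral_congr_ae this, integral_sub (integrable_const _) ((sv_int b k ρ).const_mul _),
      integral_const_mul]
    simp
  have k1 := key ν h2
  have k2 := key ν' hV
  rw [hpot, hpot] at k2
  rw [← h3 k]
  linarith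

lemma cost_FF {b : Torus n} {ν ν' : Measure (Torus n)} {u w : Fin n → ℝ} (h : FF b ν u)
    (h' : FF b ν' w) {π : Measure (Torus n × Torus n)} (hπ : IsCpl π ν ν') :
    cost 2 π = 1 / 4 * (∑ k, u k + ∑ k, w k)
      - 1 / 2 * ∫ q, ∑ k, sv b k q.1 * sv b k q.2 ∂π := by
  have := hπ.1
  have := h.1
  have := h'.1
  have i1 : ∀ k, Integrable (fun q : Torus n × Torus n => sv b k q.1) π := fun k =>
    Integrable.of_bound ((sv_meas b k).comp measurable_fst).aestronglyMeasurable 1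
      (ae_of_all _ fun q => by
        rw [Real.norm_eq_abs, abs_of_nonneg (sv_nonneg b k _)]; exact sv_le b k _)
  have i2 : ∀ k, Integrable (fun q : Torus n × Torus n => sv b k q.2) π := fun k =>
    Integrable.of_bound ((sv_meas b k).comp measurable_snd).aestronglyMeasurable 1
      (ae_of_all _ fun q => by
        rw [Real.norm_eq_abs, abs_of_nonneg (sv_nonneg b k _)]; exact sv_le b k _)
  have hae : ∀ᵐ q ∂π, torusDist q.1 q.2 ^ (2:ℝ) = 1 / 4 * ∑ k, (sv b k q.1 + sv b k q.2)
      - 1 / 2 * ∑ k, sv b k q.1 * sv b k q.2 := by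
    filter_upwards [hπ.ae_fst h.2.1, hπ.ae_snd h'.2.1] with q h1 h2
    exact td_vx h1 h2
  unfold cost
  rw [integral_congr_ae hae, integral_sub, integral_const_mul, integral_const_mul,
    integral_finsetSum]
  · congr 2
    rw [← Finset.sum_add_distrib]
    refine Finset.sum_congr rfl fun k _ => ?_
    rw [integral_add (i1 k) (i2 k), hπ.integral_fst (sv_meas b k), hπ.integral_snd (sv_meas b k),
      h.2.2, h'.2.2]
  · exact fun k _ => (i1 k).add (i2 k)
  · exact (integrable_finsetSum _ fun k _ => (i1 k).add (i2 k)).const_mul _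
  · exact (integrable_finsetSum _ fun k _ => sv_pair_int b k π).const_mul _

/-- Marginal vector supported on two coordinates. -/
noncomputable def uv (i j : Fin n) (a c : ℝ) : Fin n → ℝ :=
  fun k => if k = i then a else if k = j then c else 0

lemma sum_uv {i j : Fin n} (hij : i ≠ j) (a c : ℝ) : ∑ k, uv i j a c k = a + c := by
  have : ∀ k, uv i j a c k = (if k = i then a else 0) + (if k = j then c else 0) := by
    intro k
    unfold uv
    by_cases h : k = i
    · subst h; simp [hij]
    · simp [h]
  simp [this, Finset.sum_add_distrib]

lemma uv_i (i j : Fin n) (a c : ℝ) : uv i j a c i = a := by simp [uv]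

lemma uv_j {i j : Fin n} (hij : i ≠ j) (a c : ℝ) : uv i j a c j = c := by simp [uv, hij.symm]

/-- Disjoint measures on two coordinate directions. -/
def Kap (b : Torus n) (i j : Fin n) (a c : ℝ) (κ : Measure (Torus n)) : Prop :=
  FF b κ (uv i j a c) ∧ ∀ᵐ y ∂κ, sv b i y * sv b j y = 0

lemma FF_ae_zero {b : Torus n} {i j : Fin n} {a c : ℝ} {κ : Measure (Torus n)}
    (h : FF b κ (uv i j a c)) : ∀ᵐ y ∂κ, ∀ k, k ≠ i → k ≠ j → sv b k y = 0 := by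
  have := h.1
  rw [ae_all_iff]
  intro k
  by_cases hi : k = i
  · simp [hi]
  by_cases hj : k = j
  · simp [hj]
  have hz := h.2.2 k
  simp only [uv, hi, hj, if_false] at hz
  rw [integral_eq_zero_iff_of_nonneg (fun y => sv_nonneg b k y) (sv_int b k κ)] at hz
  filter_upwards [hz] with y hy _ _ using hy

lemma Kap_ae {b : Torus n} {i j : Fin n} {a c : ℝ} {κ : Measure (Torus n)}
    (h : Kap b i j a c κ) : ∀ᵐ y ∂κ, (y = b ∧ sv b i y = 0 ∧ sv b j y = 0) ∨
      (y = Function.update b i (anti b i) ∧ sv b i y = 1 ∧ sv b j y = 0) ∨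
      (y = Function.update b j (anti b j) ∧ sv b i y = 0 ∧ sv b j y = 1) := by
  filter_upwards [FF_ae_zero h.1, h.1.2.1, h.2] with y h0 hV hm
  have hk : ∀ k, k ≠ i → k ≠ j → y k = b k := fun k h1 h2 => eq_of_sv_zero hV (h0 k h1 h2)
  rcases sv_zo b i y with hi | hi <;> rcases sv_zo b j y with hj | hj
  · left
    refine ⟨?_, hi, hj⟩
    funext k
    by_cases h1 : k = i
    · subst h1; exact eq_of_sv_zero hV hi
    by_cases h2 : k = j
    · subst h2; exact eq_of_sv_zero hV hj
    exact hk k h1 h2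
  · right; right
    refine ⟨?_, hi, hj⟩
    funext k
    by_cases h2 : k = j
    · subst h2; simpa [anti] using eq_of_sv_one hj
    rw [Function.update_of_ne h2]
    by_cases h1 : k = i
    · subst h1; exact eq_of_sv_zero hV hi
    exact hk k h1 h2
  · right; left
    refine ⟨?_, hi, hj⟩
    funext k
    by_cases h2 : k = i
    · subst h2; simpa [anti] using eq_of_sv_one hi
    rw [Function.update_of_ne h2]
    by_cases h1 : k = j
    · subst h1; exact eq_of_sv_zero hV hj
    exact hk k h2 h1
  · rw [hi, hj] at hm; norm_num at hm

lemma Kap_unique {b : Torus n} {i j : Fin n} (hij : i ≠ j) {a c : ℝ} {κ κ' : Measure (Torus n)}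
    (h : Kap b i j a c κ) (h' : Kap b i j a c κ') : κ = κ' := by
  have hp1 := h.1.1
  have hp2 := h'.1.1
  have sb := sv_self b
  have si : sv b i (Function.update b i (anti b i)) = 1 := by rw [sv_upd]; simp [sv_anti]
  have sij : sv b j (Function.update b i (anti b i)) = 0 := by rw [sv_upd]; simp [hij.symm]
  have sj : sv b j (Function.update b j (anti b j)) = 1 := by rw [sv_upd]; simp [sv_anti]
  have sji : sv b i (Function.update b j (anti b j)) = 0 := by rw [sv_upd]; simp [hij]
  -- masses
  have key : ∀ ρ, Kap b i j a c ρ → ρ.real {b} = 1 - a - c ∧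
      ρ.real {Function.update b i (anti b i)} = a ∧
      ρ.real {Function.update b j (anti b j)} = c := by
    intro ρ hρ
    have := hρ.1.1
    have hae := Kap_ae hρ
    have ei := hρ.1.2.2 i
    have ej := hρ.1.2.2 j
    rw [uv_i] at ei
    rw [uv_j hij] at ej
    have hind : ∀ x : Torus n, ρ.real {x} = ∫ y, Set.indicator {x} (fun _ => (1:ℝ)) y ∂ρ := by
      intro x
      rw [integral_indicator_const _ (measurableSet_singleton x)]; simp
    refine ⟨?_, ?_, ?_⟩
    · rw [hind]
      have : ∀ᵐ y ∂ρ, Set.indicator {b} (fun _ => (1:ℝ)) y = 1 - sv b i y - sv b j y := by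
        filter_upwards [hae] with y hy
        by_cases hyb : y = b
        · rw [hyb]; simp [sb]
        · rw [Set.indicator_of_notMem (by simpa using hyb)]
          rcases hy with h | h | h
          · exact absurd h.1 hyb
          · rw [h.2.1, h.2.2]; norm_num
          · rw [h.2.1, h.2.2]; norm_num
      rw [integral_congr_ae this, integral_sub (f := fun y => 1 - sv b i y)
          ((integrable_const _).sub (sv_int b i ρ)) (sv_int b j ρ),
        integral_sub (integrable_const _) (sv_int b i ρ), ei, ej]
      simp
    · rw [hind, ← ei]
      apply integral_congr_ae
      filter_upwards [hae] with y hy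
      by_cases hyb : y = Function.update b i (anti b i)
      · rw [hyb, si]; simp
      · rw [Set.indicator_of_notMem (by simpa using hyb)]
        rcases hy with h | h | h
        · rw [h.2.1]
        · exact absurd h.1 hyb
        · rw [h.2.1]
    · rw [hind, ← ej]
      apply integral_congr_ae
      filter_upwards [hae] with y hy
      by_cases hyb : y = Function.update b j (anti b j)
      · rw [hyb, sj]; simp
      · rw [Set.indicator_of_notMem (by simpa using hyb)]
        rcases hy with h | h | h
        · rw [h.2.2]
        · rw [h.2.2]
        · exact absurd h.1 hyb
  have k1 := key κ h
  have k2 := key κ' h'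
  apply eq_of_atoms_le (S := {b, Function.update b i (anti b i), Function.update b j (anti b j)})
    (by simp)
  · filter_upwards [Kap_ae h] with y hy
    rcases hy with h | h | h <;> simp [h.1]
  · rintro x (rfl | rfl | rfl)
    · rw [k1.1, k2.1]
    · rw [k1.2.1, k2.2.1]
    · rw [k1.2.2, k2.2.2]

lemma Kap_exists (b : Torus n) {i j : Fin n} (hij : i ≠ j) {a c : ℝ} (ha : 0 ≤ a) (hc : 0 ≤ c)
    (hac : a + c ≤ 1) : ∃ κ, Kap b i j a c κ := by
  set xi := Function.update b i (anti b i) with hxi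
  set xj := Function.update b j (anti b j) with hxj
  refine ⟨ENNReal.ofReal a • Measure.dirac xi + ENNReal.ofReal c • Measure.dirac xj
    + ENNReal.ofReal (1 - a - c) • Measure.dirac b, ⟨⟨?_⟩, ?_, ?_⟩, ?_⟩
  · simp only [Measure.add_apply, Measure.smul_apply, measure_univ, smul_eq_mul, mul_one]
    rw [← ENNReal.ofReal_add ha hc, ← ENNReal.ofReal_add (by linarith) (by linarith)]
    simp
  · rw [ae_add_measure_iff, ae_add_measure_iff]
    refine ⟨⟨?_, ?_⟩, ?_⟩ <;> refine Measure.ae_smul_measure ?_ _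
    · simpa [ae_dirac_eq] using Vx_upd (Vx_anti b) i
    · simpa [ae_dirac_eq] using Vx_upd (Vx_anti b) j
    · simpa [ae_dirac_eq] using Vx_self b
  · intro k
    have hi : ∀ z : Torus n, Integrable (sv b k) (Measure.dirac z) := fun z =>
      integrable_dirac (by simp)
    rw [integral_add_measure (((hi xi).smul_measure (by simp)).add_measure
      ((hi xj).smul_measure (by simp))) ((hi _).smul_measure (by simp)),
      integral_add_measure ((hi xi).smul_measure (by simp)) ((hi xj).smul_measure (by simp))]
    simp only [integral_smul_measure, integral_dirac, ENNReal.toReal_ofReal ha,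
      ENNReal.toReal_ofReal hc, sv_self, hxi, hxj, sv_upd, sv_anti, uv]
    by_cases h : k = i
    · subst h; simp [hij]
    · simp [h]
  · rw [ae_add_measure_iff, ae_add_measure_iff]
    refine ⟨⟨?_, ?_⟩, ?_⟩ <;> refine Measure.ae_smul_measure ?_ _
    · simp [ae_dirac_eq, hxi, sv_upd, hij.symm]
    · simp [ae_dirac_eq, hxj, sv_upd, hij]
    · simp [ae_dirac_eq, sv_self]

lemma Kap_lower {b : Torus n} {i j : Fin n} (hij : i ≠ j) {a c : ℝ} {u : Fin n → ℝ}
    {ν κ : Measure (Torus n)} (hν : FF b ν u) (hκ : Kap b i j a c κ) :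
    1 / 4 * (∑ k, u k + (a + c)) - 1 / 2 * (u i + u j - ∫ y, sv b i y * sv b j y ∂ν) ≤ Cst 2 ν κ := by
  have := hν.1
  have := hκ.1.1
  apply le_Cst
  intro π hπ
  have := hπ.1
  rw [cost_FF hν hκ.1 hπ, sum_uv hij]
  have e : u i + u j - ∫ y, sv b i y * sv b j y ∂ν
      = ∫ q, (sv b i q.1 + sv b j q.1 - sv b i q.1 * sv b j q.1) ∂π := by
    rw [hπ.integral_fst (f := fun y => sv b i y + sv b j y - sv b i y * sv b j y)
      (((sv_meas b i).add (sv_meas b j)).sub ((sv_meas b i).mul (sv_meas b j))),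
      integral_sub (f := fun y => sv b i y + sv b j y)
        ((sv_int b i ν).add (sv_int b j ν)) (sv_mul_int b i j ν),
      integral_add (sv_int b i ν) (sv_int b j ν), hν.2.2, hν.2.2]
  rw [e]
  have hle : ∫ q, ∑ k, sv b k q.1 * sv b k q.2 ∂π
      ≤ ∫ q, (sv b i q.1 + sv b j q.1 - sv b i q.1 * sv b j q.1) ∂π := by
    apply integral_mono_ae (integrable_finsetSum _ fun k _ => sv_pair_int b k π)
    · have h0 : Integrable (fun y => sv b i y + sv b j y - sv b i y * sv b j y) ν :=
        ((sv_int b i ν).add (sv_int b j ν)).sub (sv_mul_int b i j ν)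
      rw [← hπ.2.1] at h0
      exact h0.comp_measurable measurable_fst
    · filter_upwards [hπ.ae_snd (FF_ae_zero hκ.1), hπ.ae_snd hκ.2] with q h0 hm
      have hs : ∑ k, sv b k q.1 * sv b k q.2 = sv b i q.1 * sv b i q.2 + sv b j q.1 * sv b j q.2 := by
        rw [← Finset.sum_pair (f := fun k => sv b k q.1 * sv b k q.2) hij]
        symm
        apply Finset.sum_subset (Finset.subset_univ _)
        intro k _ hk
        simp only [Finset.mem_insert, Finset.mem_singleton, not_or] at hk
        rw [h0 k hk.1 hk.2, mul_zero]
      simp only [hs]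
      rcases sv_zo b i q.1 with h1 | h1 <;> rcases sv_zo b j q.1 with h2 | h2 <;>
      rcases sv_zo b i q.2 with h3 | h3 <;> rcases sv_zo b j q.2 with h4 | h4 <;>
      simp [h1, h2, h3, h4] at hm ⊢
  linarith

lemma meas_upd (b : Torus n) (i : Fin n) :
    Measurable (fun y : Torus n => Function.update b i (y i)) :=
  (measurable_update b).comp (measurable_pi_apply i)

lemma Kap_upper {b : Torus n} {i j : Fin n} (hij : i ≠ j) {a c : ℝ}
    {ν κ : Measure (Torus n)} (hν : FF b ν (uv i j (2 * a) (2 * c))) (hκ : Kap b i j a c κ) :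
    Cst 2 κ ν ≤ (a + c) / 4 := by
  have hp := hν.1
  have hmi : Measurable (fun y : Torus n => (Function.update b i (y i), y)) :=
    (meas_upd b i).prodMk measurable_id
  have hmj : Measurable (fun y : Torus n => (Function.update b j (y j), y)) :=
    (meas_upd b j).prodMk measurable_id
  set w : ENNReal := ENNReal.ofReal (1 / 2) with hw
  have hww : w + w = 1 := by
    rw [hw, ← ENNReal.ofReal_add (by norm_num) (by norm_num)]; norm_num
  have hwr : w.toReal = 1 / 2 := by rw [hw, ENNReal.toReal_ofReal (by norm_num)]
  have hwt : w ≠ ⊤ := by simp [hw]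
  set π : Measure (Torus n × Torus n) :=
    w • ν.map (fun y : Torus n => (Function.update b i (y i), y))
    + w • ν.map (fun y : Torus n => (Function.update b j (y j), y)) with hπ
  have hP1 := Measure.isProbabilityMeasure_map (μ := ν) hmi.aemeasurable
  have hP2 := Measure.isProbabilityMeasure_map (μ := ν) hmj.aemeasurable
  have hπp : IsProbabilityMeasure π := by
    constructor
    simp only [hπ, Measure.add_apply, Measure.smul_apply, measure_univ, smul_eq_mul, mul_one, hww]
  have hsnd : π.map Prod.snd = ν := by
    rw [hπ, Measure.map_add _ _ measurable_snd, Measure.map_smul, Measure.map_smul,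
      Measure.map_map measurable_snd hmi, Measure.map_map measurable_snd hmj]
    have e1 : (Prod.snd ∘ fun y : Torus n => (Function.update b i (y i), y)) = id := rfl
    have e2 : (Prod.snd ∘ fun y : Torus n => (Function.update b j (y j), y)) = id := rfl
    rw [e1, e2, Measure.map_id, ← add_smul, hww, one_smul]
  have hfst : π.map Prod.fst = w • ν.map (fun y : Torus n => Function.update b i (y i))
      + w • ν.map (fun y : Torus n => Function.update b j (y j)) := by
    rw [hπ, Measure.map_add _ _ measurable_fst, Measure.map_smul, Measure.map_smul,
      Measure.map_map measurable_fst hmi, Measure.map_map measurable_fst hmj]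
    rfl
  have hQ1 := Measure.isProbabilityMeasure_map (μ := ν) (meas_upd b i).aemeasurable
  have hQ2 := Measure.isProbabilityMeasure_map (μ := ν) (meas_upd b j).aemeasurable
  have hκ' : Kap b i j a c (π.map Prod.fst) := by
    refine ⟨⟨Measure.isProbabilityMeasure_map measurable_fst.aemeasurable, ?_, ?_⟩, ?_⟩
    · rw [hfst, ae_add_measure_iff]
      have hcl : ∀ k, MeasurableSet {y : Torus n | y k = b k ∨ y k = b k + half} := fun k =>
        (coord_meas k (b k)).union
          (coord_meas k (b k + half))
      have hms : MeasurableSet {y : Torus n | Vx b y} := by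
        have : {y : Torus n | Vx b y} = ⋂ k, {y : Torus n | y k = b k ∨ y k = b k + half} := by
          ext y; simp [Vx]
        rw [this]; exact MeasurableSet.iInter hcl
      refine ⟨?_, ?_⟩ <;> refine Measure.ae_smul_measure ?_ _
      · rw [ae_map_iff (meas_upd b i).aemeasurable hms]
        filter_upwards [hν.2.1] with y hy using Vx_upd hy i
      · rw [ae_map_iff (meas_upd b j).aemeasurable hms]
        filter_upwards [hν.2.1] with y hy using Vx_upd hy j
    · intro k
      rw [hfst, integral_add_measure ((sv_int b k _).smul_measure hwt)
        ((sv_int b k _).smul_measure hwt), integral_smul_measure, integral_smul_measure, hwr,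
        integral_map (meas_upd b i).aemeasurable (sv_meas b k).aestronglyMeasurable,
        integral_map (meas_upd b j).aemeasurable (sv_meas b k).aestronglyMeasurable]
      simp only [sv_upd]
      have ei := hν.2.2 i
      have ej := hν.2.2 j
      rw [uv_i] at ei
      rw [uv_j hij] at ej
      by_cases h : k = i
      · subst h; simp [hij, uv, ei]
      · by_cases h' : k = j
        · subst h'; simp [h, uv, ej]
        · simp [h, h', uv]
    · have hms : MeasurableSet {y : Torus n | sv b i y * sv b j y = 0} :=
        ((sv_meas b i).mul (sv_meas b j)) (measurableSet_singleton 0)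
      rw [hfst, ae_add_measure_iff]
      refine ⟨?_, ?_⟩ <;> refine Measure.ae_smul_measure ?_ _
      · rw [ae_map_iff (meas_upd b i).aemeasurable hms]
        exact ae_of_all _ fun y => by simp [sv_upd, hij.symm]
      · rw [ae_map_iff (meas_upd b j).aemeasurable hms]
        exact ae_of_all _ fun y => by simp [sv_upd, hij]
  have hcpl : IsCpl π κ ν := ⟨hπp, Kap_unique hij hκ' hκ, hsnd⟩
  refine (Cst_le hcpl).trans ?_
  rw [cost_FF hκ.1 hν hcpl, sum_uv hij, sum_uv hij]
  have hI : Integrable (fun q : Torus n × Torus n => ∑ k, sv b k q.1 * sv b k q.2)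
      (ν.map (fun y : Torus n => (Function.update b i (y i), y))) :=
    integrable_finsetSum _ fun k _ => sv_pair_int b k _
  have hJ : Integrable (fun q : Torus n × Torus n => ∑ k, sv b k q.1 * sv b k q.2)
      (ν.map (fun y : Torus n => (Function.update b j (y j), y))) :=
    integrable_finsetSum _ fun k _ => sv_pair_int b k _
  have hsq : ∀ k y, sv b k y * sv b k y = sv b k y := by
    intro k y
    rcases sv_zo b k y with h | h <;> rw [h] <;> norm_num
  have e : ∫ q, ∑ k, sv b k q.1 * sv b k q.2 ∂π = a + c := by
    rw [hπ, integral_add_measure (hI.smul_measure hwt) (hJ.smul_measure hwt),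
      integral_smul_measure, integral_smul_measure, hwr,
      integral_map hmi.aemeasurable hI.aestronglyMeasurable,
      integral_map hmj.aemeasurable hJ.aestronglyMeasurable]
    simp only [sv_upd, ite_mul, zero_mul, Finset.sum_ite_eq', Finset.mem_univ, if_true, hsq]
    rw [hν.2.2, hν.2.2, uv_i, uv_j hij, smul_eq_mul, smul_eq_mul]
    ring
  rw [e]
  apply le_of_eq
  ring

lemma Kap_fixed {Φ : Measure (Torus n) → Measure (Torus n)}
    (hprob : ∀ μ, IsProbabilityMeasure μ → IsProbabilityMeasure (Φ μ))
    (hsurj : ∀ ρ, IsProbabilityMeasure ρ → ∃ μ, IsProbabilityMeasure μ ∧ Φ μ = ρ)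
    (hC : ∀ μ ν, IsProbabilityMeasure μ → IsProbabilityMeasure ν → Cst 2 (Φ μ) (Φ ν) = Cst 2 μ ν)
    (hpot : ∀ μ, IsProbabilityMeasure μ → ∀ z, pot 2 (Φ μ) z = pot 2 μ z)
    {b : Torus n} {i j : Fin n} (hij : i ≠ j) {a c : ℝ} (ha : 0 ≤ a) (hc : 0 ≤ c)
    (hac : 2 * a + 2 * c ≤ 1) {κ : Measure (Torus n)} (hκ : Kap b i j a c κ) : Φ κ = κ := by
  have hκp := hκ.1.1
  obtain ⟨κ2, hκ2⟩ := Kap_exists b hij (a := 2 * a) (c := 2 * c) (by linarith) (by linarith) hac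
  obtain ⟨ν, hν, hνe⟩ := hsurj κ2 hκ2.1.1
  have hνF : FF b ν (uv i j (2 * a) (2 * c)) :=
    FF_of_pot hκ2.1 hν (fun z => by rw [← hνe, hpot ν hν])
  have hΦF : FF b (Φ κ) (uv i j a c) := FF_of_pot hκ.1 (hprob κ hκp) (fun z => hpot κ hκp z)
  have hP := hΦF.1
  have up := Kap_upper hij hνF hκ
  have lo := Kap_lower hij hΦF hκ2
  rw [← hC κ ν hκp hν, hνe] at up
  rw [sum_uv hij, uv_i, uv_j hij] at lo
  have h0 : 0 ≤ ∫ y, sv b i y * sv b j y ∂(Φ κ) :=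
    integral_nonneg fun y => mul_nonneg (sv_nonneg b i y) (sv_nonneg b j y)
  have hz : ∫ y, sv b i y * sv b j y ∂(Φ κ) = 0 := by linarith
  rw [integral_eq_zero_iff_of_nonneg (fun y => mul_nonneg (sv_nonneg b i y) (sv_nonneg b j y))
    (sv_mul_int b i j _)] at hz
  exact Kap_unique hij ⟨hΦF, hz⟩ hκ

lemma FF_eta {b : Torus n} {α : ℝ} (h0 : 0 ≤ α) (h1 : α ≤ 1) :
    FF b (eta (anti b) α) (fun _ => α) := by
  refine ⟨eta_prob _ h0 h1, ?_, ?_⟩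
  · filter_upwards [eta_ae (anti b) α] with y hy
    rw [anti_anti] at hy
    rcases hy with rfl | rfl
    · exact Vx_anti b
    · exact Vx_self _
  · intro k
    rw [integral_eta _ h0 h1, anti_anti, sv_anti, sv_self]; ring

lemma pair_zero {Φ : Measure (Torus n) → Measure (Torus n)}
    (hprob : ∀ μ, IsProbabilityMeasure μ → IsProbabilityMeasure (Φ μ))
    (hsurj : ∀ ρ, IsProbabilityMeasure ρ → ∃ μ, IsProbabilityMeasure μ ∧ Φ μ = ρ)
    (hC : ∀ μ ν, IsProbabilityMeasure μ → IsProbabilityMeasure ν → Cst 2 (Φ μ) (Φ ν) = Cst 2 μ ν)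
    (hpot : ∀ μ, IsProbabilityMeasure μ → ∀ z, pot 2 (Φ μ) z = pot 2 μ z)
    (b : Torus n) {α : ℝ} (h0 : 0 ≤ α) (h1 : α ≤ 1 / 4) {i j : Fin n} (hij : i ≠ j) :
    ∀ᵐ y ∂(Φ (eta (anti b) α)), sv b j y = sv b i y * sv b j y := by
  classical
  have hη := FF_eta (b := b) h0 (by linarith : α ≤ 1)
  have hηp := hη.1
  set ν := Φ (eta (anti b) α) with hν
  have hF : FF b ν (fun _ => α) := FF_of_pot hη (hprob _ hηp) (fun z => hpot _ hηp z)
  have hνp := hF.1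
  have hsq : ∀ k y, sv b k y * sv b k y = sv b k y := by
    intro k y
    rcases sv_zo b k y with h | h <;> rw [h] <;> norm_num
  set R : Torus n → Torus n := fun y => if y i = b i + half then Function.update b i (y i)
    else Function.update b j (y j) with hR
  have hRm : Measurable R := Measurable.ite
    (coord_meas i (b i + half)) (meas_upd b i) (meas_upd b j)
  have hRV : ∀ y, Vx b y → Vx b (R y) := by
    intro y hy
    simp only [hR]
    split_ifs
    · exact Vx_upd hy i
    · exact Vx_upd hy j
  have hRs : ∀ k y, sv b k (R y) = if k = i then sv b i y else if k = j then
      sv b j y - sv b i y * sv b j y else 0 := by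
    intro k y
    simp only [hR]
    by_cases h : y i = b i + half
    · rw [if_pos h, sv_upd, sv_of_anti h]
      by_cases hk : k = i
      · simp [hk]
      · simp [hk]
    · have hi0 : sv b i y = 0 := by unfold sv; rw [if_neg h]
      rw [if_neg h, sv_upd, hi0]
      by_cases hk : k = i
      · subst hk; simp [hij]
      · simp [hk]
  set c : ℝ := ∫ y, (sv b j y - sv b i y * sv b j y) ∂ν with hc
  have hnn : ∀ y, 0 ≤ sv b j y - sv b i y * sv b j y := by
    intro y
    nlinarith [sv_nonneg b j y, sv_le b i y]
  have integ : Integrable (fun y => sv b j y - sv b i y * sv b j y) ν :=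
    (sv_int b j ν).sub (sv_mul_int b i j ν)
  have hc0 : 0 ≤ c := integral_nonneg hnn
  have hcα : c ≤ α := by
    rw [hc]
    refine le_trans ?_ (hF.2.2 j).le
    apply integral_mono integ (sv_int b j ν)
    intro y
    have := mul_nonneg (sv_nonneg b i y) (sv_nonneg b j y)
    simp only
    linarith
  have hκ : Kap b i j α c (ν.map R) := by
    refine ⟨⟨Measure.isProbabilityMeasure_map hRm.aemeasurable, ?_, ?_⟩, ?_⟩
    · have hms : MeasurableSet {y : Torus n | Vx b y} := by
        have : {y : Torus n | Vx b y} = ⋂ k, {y : Torus n | y k = b k ∨ y k = b k + half} := by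
          ext y; simp [Vx]
        rw [this]
        exact MeasurableSet.iInter fun k =>
          (coord_meas k (b k)).union
          (coord_meas k (b k + half))
      rw [ae_map_iff hRm.aemeasurable hms]
      filter_upwards [hF.2.1] with y hy using hRV y hy
    · intro k
      rw [integral_map hRm.aemeasurable (sv_meas b k).aestronglyMeasurable]
      simp only [hRs, uv]
      by_cases hk : k = i
      · simp only [hk, if_true]; exact hF.2.2 i
      · by_cases hk' : k = j
        · simp only [hk, hk', hij.symm, if_true, if_false]; exact hc.symm
        · simp [hk, hk']
    · have hms : MeasurableSet {y : Torus n | sv b i y * sv b j y = 0} :=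
        ((sv_meas b i).mul (sv_meas b j)) (measurableSet_singleton 0)
      rw [ae_map_iff hRm.aemeasurable hms]
      refine ae_of_all _ fun y => ?_
      simp only [hRs, hij.symm, if_true, if_false]
      linear_combination (-sv b j y) * hsq i y
  have hfix := Kap_fixed hprob hsurj hC hpot hij h0 hc0 (by linarith) hκ
  have hκp := hκ.1.1
  have lo := Kap_lower hij hη hκ
  rw [← hC _ _ hηp hκp, hfix, ← hν] at lo
  have hmp : Measurable (fun y => (y, R y)) := measurable_id.prodMk hRm
  have hcpl : IsCpl (ν.map (fun y => (y, R y))) ν (ν.map R) := by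
    refine ⟨Measure.isProbabilityMeasure_map hmp.aemeasurable, ?_, ?_⟩
    · rw [Measure.map_map measurable_fst hmp]
      exact Measure.map_id
    · rw [Measure.map_map measurable_snd hmp]
      rfl
  have up := Cst_le (p := 2) hcpl
  have hpp := hcpl.1
  have hI : Integrable (fun q : Torus n × Torus n => ∑ k, sv b k q.1 * sv b k q.2)
      (ν.map (fun y => (y, R y))) :=
    integrable_finsetSum _ fun k _ => sv_pair_int b k _
  have e : ∫ q, ∑ k, sv b k q.1 * sv b k q.2 ∂(ν.map (fun y => (y, R y))) = α + c := by
    rw [integral_map hmp.aemeasurable hI.aestronglyMeasurable, hc]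
    have hFi : ∫ y, sv b i y ∂ν = α := hF.2.2 i
    refine Eq.trans ?_ (congrArg (fun t => t + ∫ y, (sv b j y - sv b i y * sv b j y) ∂ν) hFi)
    simp only
    rw [← integral_add (sv_int b i ν) integ]
    congr 1
    funext y
    simp only [hRs]
    rw [← Finset.sum_subset (Finset.subset_univ {i, j}), Finset.sum_pair hij]
    · simp only [hij.symm, if_true, if_false]
      linear_combination hsq i y + (1 - sv b i y) * hsq j y
    · intro k _ hk
      simp only [Finset.mem_insert, Finset.mem_singleton, not_or] at hk
      simp [hk.1, hk.2]
  rw [cost_FF hF hκ.1 hcpl, sum_uv hij, e] at up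
  have e2 : ∫ y, sv b i y * sv b j y ∂(eta (anti b) α) = α := by
    rw [integral_eta _ h0 (by linarith), anti_anti, sv_anti, sv_anti, sv_self]; ring
  rw [e2] at lo
  have hcz : c = 0 := by linarith
  rw [hc, integral_eq_zero_iff_of_nonneg hnn integ] at hcz
  filter_upwards [hcz] with y hy
  have hy' : sv b j y - sv b i y * sv b j y = 0 := hy
  linarith

lemma fix_two (hn : 2 ≤ n) {Φ : Measure (Torus n) → Measure (Torus n)}
    (hprob : ∀ μ, IsProbabilityMeasure μ → IsProbabilityMeasure (Φ μ))
    (hsurj : ∀ ρ, IsProbabilityMeasure ρ → ∃ μ, IsProbabilityMeasure μ ∧ Φ μ = ρ)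
    (hC : ∀ μ ν, IsProbabilityMeasure μ → IsProbabilityMeasure ν → Cst 2 (Φ μ) (Φ ν) = Cst 2 μ ν)
    (hpot : ∀ μ, IsProbabilityMeasure μ → ∀ z, pot 2 (Φ μ) z = pot 2 μ z)
    (x : Torus n) {m : ℝ} (h0 : 0 ≤ m) (h1 : m ≤ 1 / 4) : Φ (eta x m) = eta x m := by
  have hb : x = anti (anti x) := (anti_anti x).symm
  set b := anti x with hbdef
  have hη := FF_eta (b := b) h0 (by linarith : m ≤ 1)
  rw [← hb] at hη
  have hηp := hη.1
  have hF : FF b (Φ (eta x m)) (fun _ => m) := FF_of_pot hη (hprob _ hηp) (fun z => hpot _ hηp z)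
  have hνp := hF.1
  apply eq_eta_of_pot hn (p := 2) (by norm_num) x h0 (by linarith) _ (fun z => hpot _ hηp z)
  have hall : ∀ᵐ y ∂(Φ (eta x m)), ∀ i j : Fin n, i ≠ j → sv b j y = sv b i y * sv b j y := by
    rw [ae_all_iff]; intro i
    rw [ae_all_iff]; intro j
    by_cases hij : i = j
    · simp [hij]
    · have := pair_zero hprob hsurj hC hpot b h0 h1 hij
      rw [← hb] at this
      filter_upwards [this] with y hy _ using hy
  filter_upwards [hall, hF.2.1] with y hy hV
  rw [← hbdef]
  by_cases hex : ∃ j, sv b j y = 1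
  · obtain ⟨j, hj⟩ := hex
    left
    rw [hb]
    funext i
    apply eq_of_sv_one (b := b)
    by_cases hij : i = j
    · rw [hij]; exact hj
    · have := hy i j hij
      rw [hj, mul_one] at this
      exact this.symm
  · right
    funext k
    apply eq_of_sv_zero hV
    exact (sv_zo b k y).resolve_right fun h => hex ⟨k, h⟩

end WT

open scoped Topology
namespace WT
variable {n : ℕ} {p : ℝ}

/-! ### Reduction to an isometry fixing Diracs -/

lemma Cst_map_le (hp0 : 0 ≤ p) {φ : Torus n → Torus n} (hφ : Measurable φ)
    (hd : ∀ x y, torusDist (φ x) (φ y) = torusDist x y) (μ ν : Measure (Torus n))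
    [IsProbabilityMeasure μ] [IsProbabilityMeasure ν] :
    Cst p (μ.map φ) (ν.map φ) ≤ Cst p μ ν := by
  apply le_Cst
  intro π hπ
  have := hπ.1
  have hm : Measurable (Prod.map φ φ) := hφ.prodMap hφ
  have hcpl : IsCpl (π.map (Prod.map φ φ)) (μ.map φ) (ν.map φ) := by
    refine ⟨Measure.isProbabilityMeasure_map hm.aemeasurable, ?_, ?_⟩
    · rw [Measure.map_map measurable_fst hm, ← hπ.2.1, Measure.map_map hφ measurable_fst]
      rfl
    · rw [Measure.map_map measurable_snd hm, ← hπ.2.2, Measure.map_map hφ measurable_snd]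
      rfl
  refine (Cst_le hcpl).trans (le_of_eq ?_)
  unfold cost
  rw [integral_map hm.aemeasurable (costfun_cont hp0).aestronglyMeasurable]
  simp [hd]

lemma td_isom_meas {φ : Torus n → Torus n}
    (hd : ∀ x y, torusDist (φ x) (φ y) = torusDist x y) : Measurable φ := by
  have : LipschitzWith (Real.toNNReal (Real.sqrt n)) φ := by
    apply LipschitzWith.of_dist_le_mul
    intro x y
    rw [Real.coe_toNNReal _ (Real.sqrt_nonneg _)]
    exact (dist_le_td _ _).trans ((hd x y).le.trans (td_le_dist x y))
  exact this.continuous.measurable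

lemma fix_eta (hn : 2 ≤ n) (hp : 1 ≤ p) {Φ : Measure (Torus n) → Measure (Torus n)}
    (hprob : ∀ μ, IsProbabilityMeasure μ → IsProbabilityMeasure (Φ μ))
    (hsurj : ∀ ρ, IsProbabilityMeasure ρ → ∃ μ, IsProbabilityMeasure μ ∧ Φ μ = ρ)
    (hC : ∀ μ ν, IsProbabilityMeasure μ → IsProbabilityMeasure ν → Cst p (Φ μ) (Φ ν) = Cst p μ ν)
    (hδ : ∀ x, Φ (Measure.dirac x) = Measure.dirac x)
    (x : Torus n) {m : ℝ} (h0 : 0 ≤ m) (h1 : m ≤ 1 / 4) : Φ (eta x m) = eta x m := by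
  have hp0 : 0 ≤ p := by linarith
  have hpot : ∀ μ, IsProbabilityMeasure μ → ∀ z, pot p (Φ μ) z = pot p μ z := by
    intro μ hμ z
    have := hprob μ hμ
    rw [← Cst_dirac hp0, ← Cst_dirac hp0, ← hC μ _ hμ inferInstance, hδ]
  have hη := eta_prob x h0 (by linarith : m ≤ 1)
  have := hprob _ hη
  rcases lt_trichotomy p 2 with h | h | h
  · exact fix_of_lt_two hn hp h x h0 (by linarith) (hpot _ hη)
  · subst h
    exact fix_two hn hprob hsurj hC hpot x h0 h1
  · exact fix_of_two_lt hn h x h0 (by linarith) (hpot _ hη)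

theorem main (hn : 2 ≤ n) (hp : 1 ≤ p)
    (Φ : Measure (Torus n) → Measure (Torus n))
    (hprob : ∀ μ, IsProbabilityMeasure μ → IsProbabilityMeasure (Φ μ))
    (hsurj : ∀ ρ, IsProbabilityMeasure ρ → ∃ μ, IsProbabilityMeasure μ ∧ Φ μ = ρ)
    (hC : ∀ μ ν, IsProbabilityMeasure μ → IsProbabilityMeasure ν →
      Cst p (Φ μ) (Φ ν) = Cst p μ ν) :
    ∃ ψ : Torus n → Torus n, Function.Bijective ψ ∧
      (∀ x y : Torus n, torusDist (ψ x) (ψ y) = torusDist x y) ∧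
      ∀ μ : Measure (Torus n), IsProbabilityMeasure μ → Φ μ = μ.map ψ := by
  have hp0 : 0 ≤ p := by linarith
  have hpn : p ≠ 0 := by linarith
  have hex : ∀ x, ∃ y, Φ (Measure.dirac x) = Measure.dirac y := by
    intro x
    have := hprob (Measure.dirac x) inferInstance
    have := hprob (Measure.dirac (anti x)) inferInstance
    apply dirac_of_Cst hn hp _ (Φ (Measure.dirac (anti x)))
    rw [hC _ _ inferInstance inferInstance, Cst_dirac_dirac hp0, td_anti]
  choose ψ hψ using hex
  have hd : ∀ x y, torusDist (ψ x) (ψ y) = torusDist x y := by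
    intro x y
    have h := hC (Measure.dirac x) (Measure.dirac y) inferInstance inferInstance
    rw [hψ, hψ, Cst_dirac_dirac hp0, Cst_dirac_dirac hp0] at h
    exact (Real.rpow_left_inj (td_nonneg _ _) (td_nonneg _ _) hpn).mp h
  have hinj : Function.Injective ψ := by
    intro x y h
    apply td_eq_zero
    rw [← hd, h, td_self]
  have hsur : Function.Surjective ψ := by
    intro y
    obtain ⟨μ, hμ, e⟩ := hsurj (Measure.dirac y) inferInstance
    obtain ⟨ν, hν, e'⟩ := hsurj (Measure.dirac (anti y)) inferInstance
    obtain ⟨x, hx⟩ := dirac_of_Cst hn hp μ ν (by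
      rw [← hC μ ν hμ hν, e, e', Cst_dirac_dirac hp0, td_anti])
    refine ⟨x, ?_⟩
    rw [hx, hψ] at e
    exact dirac_eq_dirac_iff.mp e
  refine ⟨ψ, ⟨hinj, hsur⟩, hd, ?_⟩
  set E := Equiv.ofBijective ψ ⟨hinj, hsur⟩ with hE
  have hEψ : ∀ x, ψ (E.symm x) = x := fun x => E.apply_symm_apply x
  have hψE : ∀ x, E.symm (ψ x) = x := fun x => E.symm_apply_apply x
  have hd' : ∀ x y, torusDist (E.symm x) (E.symm y) = torusDist x y := by
    intro x y
    rw [← hd, hEψ, hEψ]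
  have hm := td_isom_meas hd
  have hm' := td_isom_meas hd'
  have mm : ∀ μ : Measure (Torus n), (μ.map E.symm).map ψ = μ := by
    intro μ
    rw [Measure.map_map hm hm']
    have : ψ ∘ E.symm = id := funext hEψ
    rw [this, Measure.map_id]
  have mm' : ∀ μ : Measure (Torus n), (μ.map ψ).map E.symm = μ := by
    intro μ
    rw [Measure.map_map hm' hm]
    have : E.symm ∘ ψ = id := funext hψE
    rw [this, Measure.map_id]
  have hprob' : ∀ μ, IsProbabilityMeasure μ → IsProbabilityMeasure ((Φ μ).map E.symm) := by
    intro μ hμ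
    have := hprob μ hμ
    exact Measure.isProbabilityMeasure_map hm'.aemeasurable
  have hC' : ∀ μ ν, IsProbabilityMeasure μ → IsProbabilityMeasure ν →
      Cst p ((Φ μ).map E.symm) ((Φ ν).map E.symm) = Cst p μ ν := by
    intro μ ν hμ hν
    have i1 := hprob μ hμ
    have i2 := hprob ν hν
    have i3 := hprob' μ hμ
    have i4 := hprob' ν hν
    rw [← hC μ ν hμ hν]
    apply le_antisymm
    · exact Cst_map_le hp0 hm' hd' _ _
    · have := Cst_map_le hp0 hm hd ((Φ μ).map E.symm) ((Φ ν).map E.symm)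
      rwa [mm, mm] at this
  have hδ' : ∀ x, (Φ (Measure.dirac x)).map E.symm = Measure.dirac x := by
    intro x
    rw [hψ, Measure.map_dirac' hm', hψE]
  have hsurj' : ∀ ρ, IsProbabilityMeasure ρ → ∃ μ, IsProbabilityMeasure μ ∧
      (Φ μ).map E.symm = ρ := by
    intro ρ hρ
    obtain ⟨μ, hμ, e⟩ := hsurj (ρ.map ψ) (Measure.isProbabilityMeasure_map hm.aemeasurable)
    exact ⟨μ, hμ, by rw [e, mm']⟩
  intro μ hμ
  have := id_of_fix hn hp (fun μ => (Φ μ).map E.symm) hprob' hC' hδ' (ε := 1 / 4) (by norm_num)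
    (fun x m h0 h1 _ => fix_eta hn hp (Φ := fun μ => (Φ μ).map E.symm) hprob' hsurj' hC' hδ' x h0 h1)
    μ hμ
  rw [← mm (Φ μ), this]

end WT

/-- Isometric rigidity of the Wasserstein torus: every isometry `Φ` of
`W_p(𝕋ⁿ)` (`n ≥ 2`, `p ≥ 1`) is the push-forward by an isometry `ψ` of the
flat torus `𝕋ⁿ`, i.e. `Φ(μ) = ψ_#μ` for all `μ`. -/
theorem wasserstein_torus_rigid {n : ℕ} (hn : 2 ≤ n) {p : ℝ} (hp : 1 ≤ p)
    (Φ : Measure (Torus n) → Measure (Torus n))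
    (hbij : Set.BijOn Φ {μ : Measure (Torus n) | IsProbabilityMeasure μ}
      {μ : Measure (Torus n) | IsProbabilityMeasure μ})
    (hiso : ∀ μ ν : Measure (Torus n), IsProbabilityMeasure μ → IsProbabilityMeasure ν →
      wassersteinDist torusDist p (Φ μ) (Φ ν) = wassersteinDist torusDist p μ ν) :
    ∃ ψ : Torus n → Torus n, Function.Bijective ψ ∧
      (∀ x y : Torus n, torusDist (ψ x) (ψ y) = torusDist x y) ∧
      ∀ μ : Measure (Torus n), IsProbabilityMeasure μ → Φ μ = μ.map ψ := by
  apply WT.main hn hp Φ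
  · exact fun μ hμ => hbij.mapsTo hμ
  · exact fun ρ hρ => hbij.surjOn hρ
  · intro μ ν hμ hν
    have h : WT.Cst p (Φ μ) (Φ ν) ^ (1 / p) = WT.Cst p μ ν ^ (1 / p) := hiso μ ν hμ hν
    have hp1 : (1 / p) ≠ 0 := one_div_ne_zero (by linarith)
    exact (Real.rpow_left_inj (WT.Cst_nonneg _ _) (WT.Cst_nonneg _ _) hp1).mp h
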